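/- There exists a constant C₁ such that for all R ≥ 0: 0 ≤ λ₁(Γ) − λ₁(Γ_R) ≤ C₁ e^{−2Rω}, where ω=√(π²−λ₁(Γ)); i.e., the first mixed eigenvalue of the truncated guide converges exponentially fast, with rate 2ω, to the first Dirichlet eigenvalue of the infinite broken guide. -/

import Mathlib

/-!
*Lower bound.* A Neumann cut at distance `R` can only lower the energy: trial functions for the
infinite guide restrict to admissible functions on `Γ_R`, and the half-strips cut off carry energy
at least `π²` per unit mass by Poincaré's inequality in the transverse direction. Since
`λ₁(Γ) < π²`, by an explicit trial function on the bend, `λ₁(Γ_R)` cannot exceed `λ₁(Γ)`.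

*Upper bound.* Let `u` be admissible on `Γ_R`. Extend `u` to the guide by reflection across the two
cuts and multiply by a longitudinal cut-off, equal to `1` on the core, to `0` beyond `2R`, and to
`(1 + σ(t)) / 2` with `σ(t) = tanh (ω (R - t)) / tanh (ωR)` in between. The result is Lipschitz with
compact support and vanishes off `Γ`, which by truncation and mollification makes it a trial
function for `λ₁(Γ)`. On an arm, add the energies at the mirror points `t` and `2R - t`. For
`Λ = λ₁(Γ) = π² - ω²` their sum is the energy of `u` minus a defect, which Poincaré's inequality in
the transverse direction reduces to a one-dimensional form in `t`; the choice of `σ` makes this form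
a perfect square plus an exact derivative. All that is lost is the boundary term
`(ω / 2) (coth ωR - tanh ωR) ∫ u(0, y)² dy` at the core. These traces are bounded by the Dirichlet
energy of `u` in the core, so that `λ₁(Γ) ≤ (1 + ω (coth ωR - tanh ωR)) λ₁(Γ_R)`, and
`coth ωR - tanh ωR` is of order `e^{-2ωR}`. Neither regularity nor existence of eigenfunctions is
needed.
-/

noncomputable section
open MeasureTheory Set Real

/-- The interval `I = (-1,0)`. -/
def II : Set ℝ := Set.Ioo (-1) 0

/-- The broken guide `Γ = {x ∈ ℝ² : -1 < min(x₁,x₂) < 0}`. -/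
def Gam : Set (ℝ × ℝ) := {p | -1 < min p.1 p.2 ∧ min p.1 p.2 < 0}

/-- The box `□_L = {x : max(|x₁+1|,|x₂+1|) < L}`. -/
def Box (L : ℝ) : Set (ℝ × ℝ) := {p | |p.1 + 1| < L ∧ |p.2 + 1| < L}

/-- The finite guide `Γ_R = Γ ∩ □_{R+1}`. -/
def GamR (R : ℝ) : Set (ℝ × ℝ) := Gam ∩ Box (R + 1)

/-- The Neumann part `Σ_R = ∂Γ_R ∩ ∂□_{R+1}` of the boundary. -/
def Sig (R : ℝ) : Set (ℝ × ℝ) := frontier (GamR R) ∩ frontier (Box (R + 1))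

/-- The Dirichlet part `∂Γ_R ∖ Σ_R` of the boundary. -/
def DirB (R : ℝ) : Set (ℝ × ℝ) := frontier (GamR R) \ Sig R

/-- Squared gradient `|∇u|² = (∂₁u)² + (∂₂u)²`. -/
def gradSq2 (u : ℝ × ℝ → ℝ) (p : ℝ × ℝ) : ℝ :=
  (fderiv ℝ u p (1, 0)) ^ 2 + (fderiv ℝ u p (0, 1)) ^ 2

/-- Admissible functions for the mixed problem on `Γ_R`: `C¹` up to the boundary
(modelled by a globally `C¹` extension) vanishing on the Dirichlet part. -/
def AdmR (R : ℝ) (u : ℝ × ℝ → ℝ) : Prop :=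
  ContDiff ℝ 1 u ∧ ∀ p ∈ DirB R, u p = 0

/-- First Rayleigh quotient `λ₁(Γ_R)` of the mixed Dirichlet–Neumann Laplacian on `Γ_R`. -/
def lamR (R : ℝ) : ℝ :=
  sInf {r | ∃ u : ℝ × ℝ → ℝ, AdmR R u ∧ (∫ p in GamR R, (u p) ^ 2) ≠ 0 ∧
    r = (∫ p in GamR R, gradSq2 u p) / ∫ p in GamR R, (u p) ^ 2}

/-- First Rayleigh quotient `λ₁(Γ)` of the Dirichlet Laplacian on the broken guide `Γ`. -/
def lamG : ℝ :=
  sInf {r | ∃ u : ℝ × ℝ → ℝ, ContDiff ℝ 1 u ∧ HasCompactSupport u ∧ tsupport u ⊆ Gam ∧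
    (∫ p in Gam, (u p) ^ 2) ≠ 0 ∧
    r = (∫ p in Gam, gradSq2 u p) / ∫ p in Gam, (u p) ^ 2}

/-- `ω = √(π² − λ₁(Γ))`. -/
def omega : ℝ := Real.sqrt (π ^ 2 - lamG)

section Mollification

open scoped Convolution NNReal
open ContinuousLinearMap (lsmul)

variable {E : Type*} [NormedAddCommGroup E] [NormedSpace ℝ E] {f g : E → ℝ} {K : ℝ≥0}

lemma abs_fderiv_apply_le_of_lipschitz (hg : LipschitzWith K g) (x v : E) :
    |fderiv ℝ g x v| ≤ K * ‖v‖ :=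
  ((fderiv ℝ g x).le_opNorm v).trans <| by
    gcongr
    exact norm_fderiv_le_of_lipschitz ℝ hg

lemma abs_fderiv_apply_le_of_abs_sub_le {x : E} (hf : DifferentiableAt ℝ f x)
    (hg : DifferentiableAt ℝ g x) (hgf : ∀ y z, |g y - g z| ≤ |f y - f z|) (v : E) :
    |fderiv ℝ g x v| ≤ |fderiv ℝ f x v| := by
  refine le_of_tendsto_of_tendsto' (hg.hasFDerivAt.hasLineDerivAt v).tendsto_slope_zero.abs
    (hf.hasFDerivAt.hasLineDerivAt v).tendsto_slope_zero.abs fun t => ?_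
  simp only [smul_eq_mul, abs_mul]
  exact mul_le_mul_of_nonneg_left (hgf _ _) (abs_nonneg _)

lemma fderiv_eq_zero_of_notMem_tsupport {x : E} (hx : x ∉ tsupport g) : fderiv ℝ g x = 0 := by
  simpa using Filter.EventuallyEq.fderiv_eq (𝕜 := ℝ) (notMem_tsupport_iff_eventuallyEq.1 hx)

lemma sq_integral_mul_le_integral_mul_sq {α : Type*} [MeasurableSpace α] {μ : Measure α}
    {ψ h : α → ℝ} (hψ : ∀ t, 0 ≤ ψ t) (hψ1 : ∫ t, ψ t ∂μ = 1)
    (hh : Integrable (fun t => ψ t * h t) μ) (hh2 : Integrable (fun t => ψ t * h t ^ 2) μ) :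
    (∫ t, ψ t * h t ∂μ) ^ 2 ≤ ∫ t, ψ t * h t ^ 2 ∂μ := by
  have hψi : Integrable ψ μ := .of_integral_ne_zero (by simp [hψ1])
  set m := ∫ t, ψ t * h t ∂μ with hm
  have hdiff : Integrable (fun t => ψ t * h t ^ 2 - 2 * m * (ψ t * h t)) μ :=
    hh2.sub (hh.const_mul _)
  have variance_nonneg : 0 ≤ ∫ t, ψ t * (h t - m) ^ 2 ∂μ :=
    integral_nonneg fun t => mul_nonneg (hψ t) (sq_nonneg _)
  have variance_eq : ∫ t, ψ t * (h t - m) ^ 2 ∂μ = ∫ t, ψ t * h t ^ 2 ∂μ - m ^ 2 :=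
    calc ∫ t, ψ t * (h t - m) ^ 2 ∂μ
        = ∫ t, (ψ t * h t ^ 2 - 2 * m * (ψ t * h t) + m ^ 2 * ψ t) ∂μ := by
          congr 1 with t; ring
      _ = ∫ t, ψ t * h t ^ 2 ∂μ - m ^ 2 := by
          rw [integral_add hdiff (hψi.const_mul _),
            integral_sub hh2 (hh.const_mul _), integral_const_mul, integral_const_mul, hψ1, ← hm]
          ring
  linarith

lemma integrable_sq_fderiv_apply [MeasurableSpace E] [OpensMeasurableSpace E] {μ : Measure E}
    [IsFiniteMeasureOnCompacts μ] (hg : LipschitzWith K g) (hgc : HasCompactSupport g) (v : E) :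
    Integrable (fun x => fderiv ℝ g x v ^ 2) μ := by
  refine (integrableOn_iff_integrable_of_support_subset (s := tsupport g) fun x hx => ?_).1 <|
    Measure.integrableOn_of_bounded (M := (K * ‖v‖) ^ 2) hgc.measure_lt_top.ne
      ((measurable_fderiv_apply_const ℝ g v).pow_const 2).aestronglyMeasurable <|
      Filter.Eventually.of_forall fun x => ?_
  · contrapose! hx
    simp [fderiv_eq_zero_of_notMem_tsupport hx]
  · rw [norm_pow]
    exact pow_le_pow_left₀ (abs_nonneg _) (abs_fderiv_apply_le_of_lipschitz hg x v) 2

variable [FiniteDimensional ℝ E] [MeasurableSpace E] [BorelSpace E]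
  {μ : Measure E} [μ.IsAddHaarMeasure] (φ : ContDiffBump (0 : E))

lemma hasFDerivAt_normed_convolution (hg : LipschitzWith K g) (x : E) :
    HasFDerivAt (φ.normed μ ⋆[lsmul ℝ ℝ, μ] g) (∫ t, φ.normed μ t • fderiv ℝ g (x - t) ∂μ) x := by
  have hψ : Continuous (φ.normed μ) := φ.continuous_normed
  refine (hasFDerivAt_integral_of_dominated_loc_of_lip (bound := fun t => φ.normed μ t * K)
    (F := fun x t => φ.normed μ t • g (x - t)) (s := univ) Filter.univ_mem ?_ ?_ ?_ ?_ ?_ ?_).2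
  · exact .of_forall fun y => (hψ.smul (hg.continuous.comp (by fun_prop))).aestronglyMeasurable
  · exact φ.hasCompactSupport_normed.convolutionExists_left (lsmul ℝ ℝ) hψ
      hg.continuous.locallyIntegrable x
  · exact (hψ.measurable.smul ((measurable_fderiv ℝ g).comp
      (measurable_const.sub measurable_id))).aestronglyMeasurable
  · refine .of_forall fun t => (LipschitzWith.of_dist_le_mul fun a b => ?_).lipschitzOnWith
    have hab := hg.dist_le_mul (a - t) (b - t)
    rw [dist_sub_right] at hab
    rw [dist_smul₀, Real.norm_of_nonneg (φ.nonneg_normed t), Real.coe_nnabs,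
      abs_of_nonneg (mul_nonneg (φ.nonneg_normed t) K.coe_nonneg), mul_assoc]
    exact mul_le_mul_of_nonneg_left hab (φ.nonneg_normed t)
  · exact φ.integrable_normed.mul_const _
  · filter_upwards [(Measure.measurePreserving_sub_left μ x).quasiMeasurePreserving.ae
      hg.ae_differentiableAt] with t ht
    exact (ht.hasFDerivAt.comp x ((hasFDerivAt_id x).sub_const t)).const_smul (φ.normed μ t)

lemma fderiv_normed_convolution_apply (hg : LipschitzWith K g) (x v : E) :
    fderiv ℝ (φ.normed μ ⋆[lsmul ℝ ℝ, μ] g) x v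
      = ∫ t, φ.normed μ t * fderiv ℝ g (x - t) v ∂μ := by
  have hint : Integrable (fun t => φ.normed μ t • fderiv ℝ g (x - t)) μ :=
    φ.integrable_normed.smul_bdd K
      ((measurable_fderiv ℝ g).comp (measurable_const.sub measurable_id)).aestronglyMeasurable
      (.of_forall fun t => norm_fderiv_le_of_lipschitz ℝ hg)
  simp [(hasFDerivAt_normed_convolution φ hg x).fderiv, ContinuousLinearMap.integral_apply hint]

lemma sq_fderiv_normed_convolution_le (hg : LipschitzWith K g) (x v : E) :
    fderiv ℝ (φ.normed μ ⋆[lsmul ℝ ℝ, μ] g) x v ^ 2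
      ≤ (φ.normed μ ⋆[lsmul ℝ ℝ, μ] fun y => fderiv ℝ g y v ^ 2) x := by
  have hm : Measurable fun t => fderiv ℝ g (x - t) v :=
    (measurable_fderiv_apply_const ℝ g v).comp (measurable_const.sub measurable_id)
  rw [fderiv_normed_convolution_apply φ hg]
  refine sq_integral_mul_le_integral_mul_sq φ.nonneg_normed φ.integral_normed
    (φ.integrable_normed.mul_bdd (c := K * ‖v‖) hm.aestronglyMeasurable <|
      .of_forall fun t => abs_fderiv_apply_le_of_lipschitz hg _ v)
    (φ.integrable_normed.mul_bdd (c := (K * ‖v‖) ^ 2) (hm.pow_const 2).aestronglyMeasurable <|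
      .of_forall fun t => ?_)
  rw [norm_pow]
  exact pow_le_pow_left₀ (abs_nonneg _) (abs_fderiv_apply_le_of_lipschitz hg _ v) 2

lemma integral_sq_fderiv_normed_convolution_le (hg : LipschitzWith K g)
    (hgc : HasCompactSupport g) (v : E) :
    ∫ x, fderiv ℝ (φ.normed μ ⋆[lsmul ℝ ℝ, μ] g) x v ^ 2 ∂μ ≤ ∫ x, fderiv ℝ g x v ^ 2 ∂μ := by
  have hint : Integrable (fun x => fderiv ℝ g x v ^ 2) μ := integrable_sq_fderiv_apply hg hgc v
  calc ∫ x, fderiv ℝ (φ.normed μ ⋆[lsmul ℝ ℝ, μ] g) x v ^ 2 ∂μ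
      ≤ ∫ x, (φ.normed μ ⋆[lsmul ℝ ℝ, μ] fun y => fderiv ℝ g y v ^ 2) x ∂μ :=
        integral_mono_of_nonneg (.of_forall fun x => sq_nonneg _)
          (φ.integrable_normed.integrable_convolution (lsmul ℝ ℝ) hint)
          (.of_forall fun x => sq_fderiv_normed_convolution_le φ hg x v)
    _ = ∫ x, fderiv ℝ g x v ^ 2 ∂μ := by
        rw [integral_convolution (lsmul ℝ ℝ) φ.integrable_normed hint, φ.integral_normed]
        simp

open scoped ContDiff in
lemma exists_contDiff_approx_of_tsupport_subset (μ : Measure E) [μ.IsAddHaarMeasure] {U : Set E}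
    (hg : LipschitzWith K g) (hgc : HasCompactSupport g) (hU : IsOpen U) (hgU : tsupport g ⊆ U)
    {ε : ℝ} (hε : 0 < ε) :
    ∃ z : E → ℝ, ContDiff ℝ ∞ z ∧ HasCompactSupport z ∧ tsupport z ⊆ U ∧
      (∀ x, |z x - g x| ≤ ε) ∧ ∀ v, ∫ x, fderiv ℝ z x v ^ 2 ∂μ ≤ ∫ x, fderiv ℝ g x v ^ 2 ∂μ := by
  obtain ⟨δ, hδ, hδU⟩ := hgc.isCompact.exists_cthickening_subset_open hU hgU
  obtain ⟨d, hd, hdδ, hdε⟩ : ∃ d > 0, d ≤ δ ∧ K * d ≤ ε := by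
    refine ⟨min δ (ε / (K + 1)), by positivity, min_le_left _ _, ?_⟩
    calc (K : ℝ) * min δ (ε / (K + 1)) ≤ (K + 1) * (ε / (K + 1)) := by
          gcongr
          · linarith
          · exact min_le_right _ _
      _ = ε := by field_simp
  let φ : ContDiffBump (0 : E) := ⟨d / 2, d, half_pos hd, half_lt_self hd⟩
  set z := φ.normed μ ⋆[lsmul ℝ ℝ, μ] g
  have tsupport_z : tsupport z ⊆ Metric.cthickening δ (tsupport g) := by
    refine closure_minimal ?_ Metric.isClosed_cthickening
    refine (support_convolution_subset (lsmul ℝ ℝ)).trans ?_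
    rw [φ.support_normed_eq]
    rintro _ ⟨a, ha, b, hb, rfl⟩
    refine Metric.mem_cthickening_of_dist_le _ b _ _ (subset_tsupport g hb) ?_
    simpa [dist_eq_norm] using (mem_ball_zero_iff.1 ha).le.trans hdδ
  refine ⟨z, φ.hasCompactSupport_normed.contDiff_convolution_left (lsmul ℝ ℝ) φ.contDiff_normed
      hg.continuous.locallyIntegrable,
    hgc.isCompact.cthickening.of_isClosed_subset (isClosed_tsupport z) tsupport_z,
    tsupport_z.trans hδU, fun x => ?_, integral_sq_fderiv_normed_convolution_le φ hg hgc⟩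
  refine φ.dist_normed_convolution_le hg.continuous.aestronglyMeasurable fun y hy => ?_
  calc dist (g y) (g x) ≤ K * dist y x := hg.dist_le_mul y x
    _ ≤ K * d := by gcongr; exact (Metric.mem_ball.1 hy).le
    _ ≤ ε := hdε

/-- Soft thresholding at height `ε`, which moves every real number towards `0` by `ε`, but not
beyond `0`. -/
def softThreshold (ε t : ℝ) : ℝ := max (t - ε) (min (t + ε) 0)

lemma lipschitzWith_softThreshold (ε : ℝ) : LipschitzWith 1 (softThreshold ε) := by
  have hsub : LipschitzWith 1 fun t : ℝ => t - ε := (IsometryEquiv.subRight ε).isometry.lipschitz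
  have hadd : LipschitzWith 1 fun t : ℝ => t + ε := (IsometryEquiv.addRight ε).isometry.lipschitz
  exact max_self (1 : ℝ≥0) ▸ hsub.max (hadd.min_const 0)

lemma abs_softThreshold_sub_self_le {ε : ℝ} (hε : 0 ≤ ε) (t : ℝ) :
    |softThreshold ε t - t| ≤ ε := by
  grind [softThreshold]

lemma softThreshold_eq_zero {ε t : ℝ} (ht : |t| ≤ ε) : softThreshold ε t = 0 := by
  grind [softThreshold]

open scoped ContDiff in
/-- Soft thresholding moves the support into `{w ≠ 0}`, where there is room for a mollification. -/
lemma exists_contDiff_approx_of_lipschitz (μ : Measure E) [μ.IsAddHaarMeasure] {w : E → ℝ}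
    (hw : LipschitzWith K w) (hwc : HasCompactSupport w) {ε : ℝ} (hε : 0 < ε) :
    ∃ z : E → ℝ, ContDiff ℝ ∞ z ∧ HasCompactSupport z ∧ tsupport z ⊆ Function.support w ∧
      (∀ x, |z x - w x| ≤ ε) ∧
      ∀ v, ∫ x, fderiv ℝ z x v ^ 2 ∂μ ≤ ∫ x in Function.support w, fderiv ℝ w x v ^ 2 ∂μ := by
  have hε2 := half_pos hε
  set g : E → ℝ := fun x => softThreshold (ε / 2) (w x)
  have hg : LipschitzWith K g := one_mul K ▸ (lipschitzWith_softThreshold (ε / 2)).comp hw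
  have tsupport_g : tsupport g ⊆ {x | ε / 2 ≤ |w x|} := by
    refine closure_minimal (fun x hx => ?_) (isClosed_le continuous_const hw.continuous.abs)
    contrapose! hx
    exact Function.notMem_support.2 (softThreshold_eq_zero (not_le.1 hx).le)
  have tsupport_g_subset : tsupport g ⊆ Function.support w := fun x hx hwx => by
    have : ε / 2 ≤ |w x| := tsupport_g hx
    simp [hwx] at this
    linarith
  have hgc : HasCompactSupport g := hwc.isCompact.of_isClosed_subset (isClosed_tsupport g)
    (tsupport_g_subset.trans (subset_tsupport w))
  obtain ⟨z, hz, hzc, hzU, hzg, hzD⟩ := exists_contDiff_approx_of_tsupport_subset μ hg hgc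
    hw.continuous.isOpen_support tsupport_g_subset hε2
  refine ⟨z, hz, hzc, hzU, fun x => ?_, fun v => (hzD v).trans ?_⟩
  · calc |z x - w x| ≤ |z x - g x| + |g x - w x| := abs_sub_le _ _ _
      _ ≤ ε / 2 + ε / 2 := add_le_add (hzg x) (abs_softThreshold_sub_self_le hε2.le _)
      _ = ε := add_halves ε
  · calc ∫ x, fderiv ℝ g x v ^ 2 ∂μ = ∫ x in Function.support w, fderiv ℝ g x v ^ 2 ∂μ := by
          refine (setIntegral_eq_integral_of_forall_compl_eq_zero fun x hx => ?_).symm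
          simp [fderiv_eq_zero_of_notMem_tsupport fun h => hx (tsupport_g_subset h)]
      _ ≤ ∫ x in Function.support w, fderiv ℝ w x v ^ 2 ∂μ := by
          refine integral_mono_ae (integrable_sq_fderiv_apply hg hgc v).integrableOn
            (integrable_sq_fderiv_apply hw hwc v).integrableOn (ae_restrict_of_ae ?_)
          filter_upwards [hw.ae_differentiableAt, hg.ae_differentiableAt] with x hwx hgx
          exact sq_le_sq.2 <| abs_fderiv_apply_le_of_abs_sub_le hwx hgx (fun y z => by
            simpa [Real.dist_eq] using
              (lipschitzWith_softThreshold (ε / 2)).dist_le_mul (w y) (w z)) v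

end Mollification

lemma lipschitzWith_mul_of_norm_le {X R : Type*} [PseudoMetricSpace X] [NonUnitalSeminormedRing R]
    {f g : X → R} {Kf Kg A B : NNReal} (hf : LipschitzWith Kf f) (hg : LipschitzWith Kg g)
    (hA : ∀ x, ‖f x‖ ≤ A) (hB : ∀ x, ‖g x‖ ≤ B) :
    LipschitzWith (A * Kg + B * Kf) fun x => f x * g x := by
  refine LipschitzWith.of_dist_le_mul fun x y => ?_
  calc dist (f x * g x) (f y * g y) = ‖f x * (g x - g y) + (f x - f y) * g y‖ := by
        rw [dist_eq_norm]; congr 1; noncomm_ring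
    _ ≤ ‖f x‖ * dist (g x) (g y) + dist (f x) (f y) * ‖g y‖ := by
        simp only [dist_eq_norm]
        exact (norm_add_le _ _).trans (add_le_add (norm_mul_le _ _) (norm_mul_le _ _))
    _ ≤ A * (Kg * dist x y) + Kf * dist x y * B := by
        gcongr
        exacts [hA x, hg.dist_le_mul x y, hf.dist_le_mul x y, hB y]
    _ = ↑(A * Kg + B * Kf) * dist x y := by push_cast; ring

/-- The infimum of the Rayleigh quotients `∫_S |∇u|² / ∫_S u²` over a class `A` of trial functions,
the common form of `lamR` and `lamG`. -/
def rayleighInf (A : Set (ℝ × ℝ → ℝ)) (S : Set (ℝ × ℝ)) : ℝ :=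
  sInf {r | ∃ u ∈ A, (∫ p in S, u p ^ 2) ≠ 0 ∧
    r = (∫ p in S, gradSq2 u p) / ∫ p in S, u p ^ 2}

/-- The quadratic form `∫_S (|∇u|² - Λ u²)`, whose sign compares the Rayleigh quotient of `u`
with `Λ`. -/
def shiftedEnergy (Λ : ℝ) (S : Set (ℝ × ℝ)) (u : ℝ × ℝ → ℝ) : ℝ :=
  ∫ p in S, (gradSq2 u p - Λ * u p ^ 2)

section Rayleigh

variable {A : Set (ℝ × ℝ → ℝ)} {S : Set (ℝ × ℝ)} {u : ℝ × ℝ → ℝ} {Λ : ℝ}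

lemma gradSq2_nonneg (u : ℝ × ℝ → ℝ) (p : ℝ × ℝ) : 0 ≤ gradSq2 u p :=
  add_nonneg (sq_nonneg _) (sq_nonneg _)

lemma rayleighInf_quotient_nonneg (S : Set (ℝ × ℝ)) (u : ℝ × ℝ → ℝ) :
    0 ≤ (∫ p in S, gradSq2 u p) / ∫ p in S, u p ^ 2 :=
  div_nonneg (integral_nonneg (gradSq2_nonneg u)) (integral_nonneg fun _ => sq_nonneg _)

lemma rayleighInf_nonneg (A : Set (ℝ × ℝ → ℝ)) (S : Set (ℝ × ℝ)) : 0 ≤ rayleighInf A S := by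
  refine Real.sInf_nonneg ?_
  rintro _ ⟨u, -, -, rfl⟩
  exact rayleighInf_quotient_nonneg S u

lemma rayleighInf_mul_integral_sq_le (hu : u ∈ A) :
    rayleighInf A S * ∫ p in S, u p ^ 2 ≤ ∫ p in S, gradSq2 u p := by
  have hnorm : 0 ≤ ∫ p in S, u p ^ 2 := integral_nonneg fun _ => sq_nonneg _
  rcases hnorm.eq_or_lt with h | h
  · rw [← h, mul_zero]
    exact integral_nonneg (gradSq2_nonneg u)
  · rw [← le_div_iff₀ h]
    refine csInf_le ⟨0, ?_⟩ ⟨u, hu, h.ne', rfl⟩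
    rintro _ ⟨u, -, -, rfl⟩
    exact rayleighInf_quotient_nonneg S u

lemma le_rayleighInf (hne : ∃ u ∈ A, (∫ p in S, u p ^ 2) ≠ 0)
    (h : ∀ u ∈ A, Λ * ∫ p in S, u p ^ 2 ≤ ∫ p in S, gradSq2 u p) : Λ ≤ rayleighInf A S := by
  obtain ⟨u₀, hu₀, hne⟩ := hne
  refine le_csInf ⟨_, u₀, hu₀, hne, rfl⟩ ?_
  rintro _ ⟨u, hu, hu0, rfl⟩
  rw [le_div_iff₀ ((integral_nonneg fun _ => sq_nonneg _).lt_of_ne' hu0)]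
  exact h u hu

lemma shiftedEnergy_eq_sub (hgrad : IntegrableOn (gradSq2 u) S)
    (hsq : IntegrableOn (fun p => u p ^ 2) S) :
    shiftedEnergy Λ S u = (∫ p in S, gradSq2 u p) - Λ * ∫ p in S, u p ^ 2 := by
  rw [shiftedEnergy, integral_sub hgrad (hsq.const_mul Λ), integral_const_mul]

lemma lamR_eq_rayleighInf (R : ℝ) : lamR R = rayleighInf {u | AdmR R u} (GamR R) := rfl

lemma lamG_eq_rayleighInf :
    lamG = rayleighInf {u | ContDiff ℝ 1 u ∧ HasCompactSupport u ∧ tsupport u ⊆ Gam} Gam := by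
  simp only [lamG, rayleighInf, mem_ofPred_eq, and_assoc]

end Rayleigh

section LipschitzTrial

variable {w : ℝ × ℝ → ℝ} {K : NNReal}

lemma integrable_sq_of_hasCompactSupport (hw : Continuous w) (hc : HasCompactSupport w) :
    Integrable fun p => w p ^ 2 :=
  (hw.pow 2).integrable_of_hasCompactSupport (hc.mono fun p hp h => hp (by simp [h]))

lemma integrable_gradSq2_of_lipschitz (hw : LipschitzWith K w) (hc : HasCompactSupport w) :
    Integrable (gradSq2 w) :=
  (integrable_sq_fderiv_apply hw hc _).add (integrable_sq_fderiv_apply hw hc _)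

lemma integrable_gradSq2_sub_of_lipschitz (hw : LipschitzWith K w) (hc : HasCompactSupport w)
    (Λ : ℝ) : Integrable fun p => gradSq2 w p - Λ * w p ^ 2 :=
  (integrable_gradSq2_of_lipschitz hw hc).sub
    ((integrable_sq_of_hasCompactSupport hw.continuous hc).const_mul Λ)

lemma shiftedEnergy_eq_sub_of_lipschitz (hw : LipschitzWith K w) (hc : HasCompactSupport w)
    (Λ : ℝ) (S : Set (ℝ × ℝ)) :
    shiftedEnergy Λ S w = (∫ p in S, gradSq2 w p) - Λ * ∫ p in S, w p ^ 2 :=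
  shiftedEnergy_eq_sub (integrable_gradSq2_of_lipschitz hw hc).integrableOn
    (integrable_sq_of_hasCompactSupport hw.continuous hc).integrableOn

lemma exists_contDiff_gradSq2_le (hw : LipschitzWith K w) (hc : HasCompactSupport w) {ε : ℝ}
    (hε : 0 < ε) :
    ∃ z : ℝ × ℝ → ℝ, ContDiff ℝ 1 z ∧ HasCompactSupport z ∧ tsupport z ⊆ Function.support w ∧
      (∀ p, |z p - w p| ≤ ε) ∧ ∫ p, gradSq2 z p ≤ ∫ p in Function.support w, gradSq2 w p := by
  obtain ⟨z, hz, hzc, hzs, hzw, hgrad⟩ := exists_contDiff_approx_of_lipschitz volume hw hc hε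
  have hz1 : ContDiff ℝ 1 z := hz.of_le (by exact_mod_cast le_top)
  obtain ⟨Kz, hzL⟩ := hz1.lipschitzWith_of_hasCompactSupport hzc one_ne_zero
  refine ⟨z, hz1, hzc, hzs, hzw, ?_⟩
  unfold gradSq2
  rw [integral_add (integrable_sq_fderiv_apply hzL hzc _) (integrable_sq_fderiv_apply hzL hzc _),
    integral_add (integrable_sq_fderiv_apply hw hc _).integrableOn
      (integrable_sq_fderiv_apply hw hc _).integrableOn]
  exact add_le_add (hgrad _) (hgrad _)

lemma tendsto_setIntegral_sq_of_abs_sub_le (hw : Continuous w) (hc : HasCompactSupport w)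
    {z : ℕ → ℝ × ℝ → ℝ} (hz : ∀ n, Continuous (z n))
    (hzs : ∀ n, Function.support (z n) ⊆ Function.support w)
    (hzw : ∀ n p, |z n p - w p| ≤ 1 / ((n : ℝ) + 1)) (S : Set (ℝ × ℝ)) :
    Filter.Tendsto (fun n => ∫ p in S, z n p ^ 2) Filter.atTop (nhds (∫ p in S, w p ^ 2)) := by
  refine tendsto_integral_of_dominated_convergence
    (fun p => (tsupport w).indicator (fun p => (|w p| + 1) ^ 2) p)
    (fun n => ((hz n).pow 2).aestronglyMeasurable) ?_ (fun n => .of_forall fun p => ?_) ?_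
  · refine Integrable.integrableOn ?_
    rw [integrable_indicator_iff (isClosed_tsupport w).measurableSet]
    exact ((by fun_prop : Continuous fun p => (|w p| + 1) ^ 2)).continuousOn.integrableOn_compact hc
  · by_cases hp : w p = 0
    · have hzp : z n p = 0 := by_contra fun h => hzs n h hp
      simpa [hzp] using indicator_nonneg (fun _ _ => sq_nonneg _) _
    · rw [indicator_of_mem (subset_tsupport w hp), norm_pow]
      gcongr
      calc ‖z n p‖ = |w p + (z n p - w p)| := by rw [Real.norm_eq_abs, add_sub_cancel]
        _ ≤ |w p| + 1 / ((n : ℝ) + 1) := (abs_add_le _ _).trans (by gcongr; exact hzw n p)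
        _ ≤ |w p| + 1 := by
          gcongr
          exact div_le_one_of_le₀ (by linarith [n.cast_nonneg (α := ℝ)]) (by positivity)
  · refine .of_forall fun p => Filter.Tendsto.pow ?_ 2
    rw [tendsto_iff_norm_sub_tendsto_zero]
    exact squeeze_zero (fun n => norm_nonneg _) (fun n => hzw n p)
      tendsto_one_div_add_atTop_nhds_zero_nat

lemma lamG_mul_integral_sq_le (hw : LipschitzWith K w) (hc : HasCompactSupport w)
    (hwG : Function.support w ⊆ Gam) :
    lamG * ∫ p in Gam, w p ^ 2 ≤ ∫ p in Gam, gradSq2 w p := by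
  choose z hz hzc hzs hzw hgrad using fun n : ℕ =>
    exists_contDiff_gradSq2_le hw hc (ε := 1 / ((n : ℝ) + 1)) Nat.one_div_pos_of_nat
  refine le_of_tendsto' ((tendsto_setIntegral_sq_of_abs_sub_le hw.continuous hc
    (fun n => (hz n).continuous) (fun n => (subset_tsupport _).trans (hzs n)) hzw Gam).const_mul
      lamG) fun n => ?_
  obtain ⟨Kz, hzL⟩ := (hz n).lipschitzWith_of_hasCompactSupport (hzc n) one_ne_zero
  calc lamG * ∫ p in Gam, z n p ^ 2 ≤ ∫ p in Gam, gradSq2 (z n) p := by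
        rw [lamG_eq_rayleighInf]
        exact rayleighInf_mul_integral_sq_le ⟨hz n, hzc n, (hzs n).trans hwG⟩
    _ ≤ ∫ p, gradSq2 (z n) p :=
        setIntegral_le_integral (integrable_gradSq2_of_lipschitz hzL (hzc n))
          (.of_forall (gradSq2_nonneg _))
    _ ≤ ∫ p in Function.support w, gradSq2 w p := hgrad n
    _ ≤ ∫ p in Gam, gradSq2 w p :=
        setIntegral_mono_set (integrable_gradSq2_of_lipschitz hw hc).integrableOn
          (.of_forall (gradSq2_nonneg _)) hwG.eventuallyLE

end LipschitzTrial

section OneDimensional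

variable {f f' : ℝ → ℝ} {a b : ℝ}

lemma integral_Ioo_eq_intervalIntegral (hab : a ≤ b) : ∫ t in Ioo a b, f t = ∫ t in a..b, f t := by
  rw [intervalIntegral.integral_of_le hab, integral_Ioc_eq_integral_Ioo]

lemma mul_sq_sub_mul_sq_le_integral {q q' F : ℝ → ℝ} (hab : a ≤ b)
    (hf : ∀ t ∈ Icc a b, HasDerivAt f (f' t) t) (hq : ∀ t ∈ Icc a b, HasDerivAt q (q' t) t)
    (hF : ContinuousOn F (Icc a b))
    (h : ∀ t ∈ Ioo a b, q' t * f t ^ 2 + q t * (2 * f t * f' t) ≤ F t) :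
    q b * f b ^ 2 - q a * f a ^ 2 ≤ ∫ t in a..b, F t := by
  have hd : ∀ t ∈ Icc a b, HasDerivAt (fun t => q t * f t ^ 2)
      (q' t * f t ^ 2 + q t * (2 * f t * f' t)) t := fun t ht =>
    ((hq t ht).mul ((hf t ht).pow 2)).congr_deriv (by simp)
  exact intervalIntegral.sub_le_integral_of_hasDeriv_right_of_le hab
    (fun t ht => (hd t ht).continuousAt.continuousWithinAt)
    (fun t ht => (hd t (Ioo_subset_Icc_self ht)).hasDerivWithinAt) hF.integrableOn_Icc h

/-- The function `q t = -κ tan (κ (t - (a + b) / 2))` solves the Riccati equation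
`q' + q² + κ² = 0`, so that `f'² - κ² f² - (q f²)' = (f' - q f)²`. -/
lemma integral_sq_deriv_sub_nonneg_of_mul_lt_pi {κ : ℝ} (hab : a ≤ b)
    (hf : ∀ t ∈ Icc a b, HasDerivAt f (f' t) t) (hf' : ContinuousOn f' (Icc a b))
    (hfa : f a = 0) (hfb : f b = 0) (hκ : 0 ≤ κ) (hκπ : κ * (b - a) < π) :
    0 ≤ ∫ t in a..b, (f' t ^ 2 - κ ^ 2 * f t ^ 2) := by
  have hfc : ContinuousOn f (Icc a b) := fun t ht => (hf t ht).continuousAt.continuousWithinAt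
  have hcos : ∀ t ∈ Icc a b, cos (κ * (t - (a + b) / 2)) ≠ 0 := fun t ht =>
    (cos_pos_of_mem_Ioo ⟨by nlinarith [ht.1], by nlinarith [ht.2]⟩).ne'
  have hq : ∀ t ∈ Icc a b, HasDerivAt (fun t => -(κ * tan (κ * (t - (a + b) / 2))))
      (-κ ^ 2 * (1 + tan (κ * (t - (a + b) / 2)) ^ 2)) t := fun t ht => by
    have harg : HasDerivAt (fun t : ℝ => κ * (t - (a + b) / 2)) κ t := by
      simpa using ((hasDerivAt_id t).sub_const ((a + b) / 2)).const_mul κ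
    refine (((hasDerivAt_tan (hcos t ht)).comp t harg).const_mul κ).neg.congr_deriv ?_
    rw [← inv_one_add_tan_sq (hcos t ht), one_div, inv_inv]
    ring
  have key := mul_sq_sub_mul_sq_le_integral (F := fun t => f' t ^ 2 - κ ^ 2 * f t ^ 2) hab hf hq
    (by fun_prop) fun t _ => by
      linarith [sq_nonneg (f' t + κ * tan (κ * (t - (a + b) / 2)) * f t)]
  simpa [hfa, hfb] using key

lemma poincare_interval (hab : a < b) (hf : ∀ t ∈ Icc a b, HasDerivAt f (f' t) t)
    (hf' : ContinuousOn f' (Icc a b)) (hfa : f a = 0) (hfb : f b = 0) :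
    0 ≤ ∫ t in a..b, (f' t ^ 2 - (π / (b - a)) ^ 2 * f t ^ 2) := by
  have hba : 0 < b - a := sub_pos.2 hab
  have hfc : ContinuousOn f (Icc a b) := fun t ht => (hf t ht).continuousAt.continuousWithinAt
  have hint : ∀ κ : ℝ, ∫ t in a..b, (f' t ^ 2 - κ ^ 2 * f t ^ 2)
      = (∫ t in a..b, f' t ^ 2) - κ ^ 2 * ∫ t in a..b, f t ^ 2 := fun κ => by
    rw [← intervalIntegral.integral_const_mul]
    exact intervalIntegral.integral_sub
      (ContinuousOn.intervalIntegrable_of_Icc hab.le (by fun_prop))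
      (ContinuousOn.intervalIntegrable_of_Icc hab.le (by fun_prop))
  have hcont : Continuous fun κ : ℝ => ∫ t in a..b, (f' t ^ 2 - κ ^ 2 * f t ^ 2) := by
    simp only [hint]
    fun_prop
  have hlim := (hcont.tendsto (π / (b - a))).mono_left
    (nhdsWithin_le_nhds (s := Iio (π / (b - a))))
  refine ge_of_tendsto hlim ?_
  filter_upwards [Ioo_mem_nhdsLT (div_pos pi_pos hba)] with κ hκ
  exact integral_sq_deriv_sub_nonneg_of_mul_lt_pi hab.le hf hf' hfa hfb hκ.1.le
    ((lt_div_iff₀ hba).1 hκ.2)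

end OneDimensional

section Slices

lemma setIntegral_prod_nonneg {α β : Type*} [MeasurableSpace α] [MeasurableSpace β]
    {μ : Measure α} {ν : Measure β} [SFinite μ] [SFinite ν] {s : Set α} {t : Set β}
    {F : α × β → ℝ} (hs : MeasurableSet s) (h : ∀ x ∈ s, 0 ≤ ∫ y in t, F (x, y) ∂ν) :
    0 ≤ ∫ p in s ×ˢ t, F p ∂μ.prod ν := by
  by_cases hF : IntegrableOn F (s ×ˢ t) (μ.prod ν)
  · rw [setIntegral_prod _ hF]
    exact setIntegral_nonneg hs h
  · rw [integral_undef hF]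

variable {u : ℝ × ℝ → ℝ}

lemma hasDerivAt_left (hu : Differentiable ℝ u) (x y : ℝ) :
    HasDerivAt (fun x => u (x, y)) (fderiv ℝ u (x, y) (1, 0)) x :=
  (hu (x, y)).hasFDerivAt.comp_hasDerivAt x ((hasDerivAt_id x).prodMk (hasDerivAt_const x y))

lemma hasDerivAt_right (hu : Differentiable ℝ u) (x y : ℝ) :
    HasDerivAt (fun y => u (x, y)) (fderiv ℝ u (x, y) (0, 1)) y :=
  (hu (x, y)).hasFDerivAt.comp_hasDerivAt y ((hasDerivAt_const y x).prodMk (hasDerivAt_id y))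

lemma continuous_fderiv_apply_const (hu : ContDiff ℝ 1 u) (v : ℝ × ℝ) :
    Continuous fun p => fderiv ℝ u p v :=
  (hu.continuous_fderiv one_ne_zero).clm_apply continuous_const

lemma continuous_gradSq2 (hu : ContDiff ℝ 1 u) : Continuous (gradSq2 u) :=
  ((continuous_fderiv_apply_const hu _).pow 2).add ((continuous_fderiv_apply_const hu _).pow 2)

lemma fderiv_comp_swap_apply (u : ℝ × ℝ → ℝ) (p v : ℝ × ℝ) :
    fderiv ℝ (u ∘ Prod.swap) p v = fderiv ℝ u p.swap v.swap :=
  congrArg (· v) ((ContinuousLinearEquiv.prodComm ℝ ℝ ℝ).comp_right_fderiv (f := u) (x := p))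

lemma gradSq2_comp_swap (u : ℝ × ℝ → ℝ) (p : ℝ × ℝ) :
    gradSq2 (u ∘ Prod.swap) p = gradSq2 u p.swap := by
  simp only [gradSq2, fderiv_comp_swap_apply, Prod.swap_prod_mk, add_comm]

lemma shiftedEnergy_comp_swap (Λ : ℝ) (s t : Set ℝ) (u : ℝ × ℝ → ℝ) :
    shiftedEnergy Λ (s ×ˢ t) (u ∘ Prod.swap) = shiftedEnergy Λ (t ×ˢ s) u := by
  simp only [shiftedEnergy, gradSq2_comp_swap, Function.comp_apply, Measure.volume_eq_prod]
  rw [setIntegral_prod_swap t s fun p => gradSq2 u p - Λ * u p ^ 2]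

lemma poincare_strip (hu : ContDiff ℝ 1 u) {J : Set ℝ} (hJ : MeasurableSet J) {c d : ℝ}
    (hcd : c < d) (hu0 : ∀ x ∈ J, u (x, c) = 0 ∧ u (x, d) = 0) {a : ℝ → ℝ}
    (ha : ∀ x ∈ J, 0 ≤ a x) :
    0 ≤ ∫ p in J ×ˢ Ioo c d,
      a p.1 * (fderiv ℝ u p (0, 1) ^ 2 - (π / (d - c)) ^ 2 * u p ^ 2) := by
  rw [Measure.volume_eq_prod]
  refine setIntegral_prod_nonneg hJ fun x hx => ?_
  simp only [integral_const_mul]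
  rw [integral_Ioo_eq_intervalIntegral hcd.le]
  exact mul_nonneg (ha x hx) <| poincare_interval hcd
    (fun y _ => hasDerivAt_right (hu.differentiable one_ne_zero) x y)
    ((continuous_fderiv_apply_const hu _).comp (by fun_prop)).continuousOn (hu0 x hx).1 (hu0 x hx).2

end Slices

section Geometry

lemma isOpen_II : IsOpen II := isOpen_Ioo

lemma measurableSet_II : MeasurableSet II := measurableSet_Ioo

lemma isOpenMap_min : IsOpenMap fun p : ℝ × ℝ => min p.1 p.2 :=
  IsOpenMap.of_sections fun p =>
    ⟨fun s => (p.1 + (s - min p.1 p.2), p.2 + (s - min p.1 p.2)), by fun_prop, by simp,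
      fun s => by simp [min_add_add_right]⟩

lemma isOpen_Gam : IsOpen Gam :=
  isOpen_Ioo.preimage (f := fun p : ℝ × ℝ => min p.1 p.2) (by fun_prop)

lemma frontier_Gam : frontier Gam = {p | min p.1 p.2 = -1 ∨ min p.1 p.2 = 0} := by
  have h := isOpenMap_min.preimage_frontier_eq_frontier_preimage (by fun_prop) (Ioo (-1) 0)
  rw [frontier_Ioo (by norm_num)] at h
  exact h.symm

lemma mem_Gam_iff {p : ℝ × ℝ} : p ∈ Gam ↔ (-1 < p.1 ∧ -1 < p.2) ∧ (p.1 < 0 ∨ p.2 < 0) := by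
  simp [Gam]

lemma mem_GamR_iff {R : ℝ} {p : ℝ × ℝ} : p ∈ GamR R ↔
    (-1 < p.1 ∧ -1 < p.2) ∧ (p.1 < 0 ∨ p.2 < 0) ∧ p.1 < R ∧ p.2 < R := by
  simp only [GamR, Box, mem_inter_iff, mem_Gam_iff, mem_ofPred_eq, abs_lt]
  grind

lemma isOpen_Box (L : ℝ) : IsOpen (Box L) :=
  (isOpen_lt (f := fun p : ℝ × ℝ => |p.1 + 1|) (by fun_prop) continuous_const).inter
    (isOpen_lt (f := fun p : ℝ × ℝ => |p.2 + 1|) (by fun_prop) continuous_const)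

lemma isOpen_GamR (R : ℝ) : IsOpen (GamR R) := isOpen_Gam.inter (isOpen_Box _)

lemma GamR_mono {R R' : ℝ} (h : R ≤ R') : GamR R ⊆ GamR R' := fun p hp => by
  rw [mem_GamR_iff] at hp ⊢
  exact ⟨hp.1, hp.2.1, hp.2.2.1.trans_le h, hp.2.2.2.trans_le h⟩

lemma GamR_zero : GamR 0 = II ×ˢ II := by
  ext p
  simp only [mem_GamR_iff, II, mem_prod, mem_Ioo]
  grind

lemma DirB_eq (R : ℝ) : DirB R = frontier Gam ∩ Box (R + 1) := by
  have hB := isOpen_Box (R + 1)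
  rw [← frontier_inter_open_inter hB]
  change frontier (GamR R) \ (frontier (GamR R) ∩ frontier (Box (R + 1)))
    = frontier (GamR R) ∩ Box (R + 1)
  ext p
  have hcl : p ∈ frontier (GamR R) → p ∈ closure (Box (R + 1)) := fun hp =>
    closure_mono inter_subset_right (frontier_subset_closure hp)
  simp only [hB.frontier_eq, mem_sdiff, mem_inter_iff]
  tauto

variable {u : ℝ × ℝ → ℝ} {R : ℝ}

lemma AdmR.comp_swap (hu : AdmR R u) : AdmR R (u ∘ Prod.swap) := by
  refine ⟨hu.1.comp (contDiff_snd.prodMk contDiff_fst), fun p hp => hu.2 _ ?_⟩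
  simpa [DirB_eq, frontier_Gam, Box, min_comm, and_comm] using hp

lemma admR_of_tsupport_subset (hu : ContDiff ℝ 1 u) (hs : tsupport u ⊆ Gam) (R : ℝ) :
    AdmR R u := by
  refine ⟨hu, fun p hp => image_eq_zero_of_notMem_tsupport fun h => ?_⟩
  rw [DirB_eq, isOpen_Gam.frontier_eq] at hp
  exact hp.1.2 (hs h)

/-- The end points of the lateral boundary, where it meets the cuts, are limits of points of
`DirB R`. -/
lemma AdmR.eq_zero (hu : AdmR R u) (hR : 0 < R) {p : ℝ × ℝ}
    (hp : min p.1 p.2 = -1 ∨ min p.1 p.2 = 0) (h1 : p.1 ≤ R) (h2 : p.2 ≤ R) : u p = 0 := by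
  have hcont : Continuous fun s : ℝ => u (min p.1 (R - s), min p.2 (R - s)) :=
    hu.1.continuous.comp (by fun_prop)
  have hlim := (hcont.tendsto 0).mono_left (nhdsWithin_le_nhds (s := Ioi 0))
  simp only [sub_zero, min_eq_left h1, min_eq_left h2] at hlim
  refine tendsto_nhds_unique_of_eventuallyEq hlim (tendsto_const_nhds (x := (0 : ℝ))) ?_
  filter_upwards [Ioo_mem_nhdsGT hR] with s hs
  refine hu.2 _ ?_
  rw [DirB_eq, frontier_Gam]
  refine ⟨?_, ?_⟩
  · have : min (min p.1 (R - s)) (min p.2 (R - s)) = min p.1 p.2 := by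
      rw [min_min_min_comm, min_self, min_eq_left]
      rcases hp with h | h <;> rw [h] <;> linarith [hs.2]
    simpa only [mem_ofPred_eq, this] using hp
  · have hs := hs.1
    simp only [Box, mem_ofPred_eq, abs_lt]
    grind

lemma shiftedEnergy_union_arms {Λ : ℝ} {J : Set ℝ} {Y : Set (ℝ × ℝ)} (hJ : MeasurableSet J)
    (hJ0 : J ⊆ Ici 0) (hYJ : ∀ p ∈ Y, p.1 ∉ J ∧ p.2 ∉ J)
    (hu : IntegrableOn (fun p => gradSq2 u p - Λ * u p ^ 2) (Y ∪ (J ×ˢ II ∪ II ×ˢ J))) :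
    shiftedEnergy Λ (Y ∪ (J ×ˢ II ∪ II ×ˢ J)) u = shiftedEnergy Λ Y u +
      (shiftedEnergy Λ (J ×ˢ II) u + shiftedEnergy Λ (J ×ˢ II) (u ∘ Prod.swap)) := by
  have hm1 : MeasurableSet (J ×ˢ II) := hJ.prod measurableSet_II
  have hm2 : MeasurableSet (II ×ˢ J) := measurableSet_II.prod hJ
  have hd1 : Disjoint (J ×ˢ II) (II ×ˢ J) :=
    disjoint_left.2 fun p h h' => absurd (hJ0 h.1) (not_le.2 h'.1.2)
  have hd2 : Disjoint Y (J ×ˢ II ∪ II ×ˢ J) :=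
    disjoint_left.2 fun p hp h => h.elim (fun h => (hYJ p hp).1 h.1) fun h => (hYJ p hp).2 h.2
  have harms := hu.mono_set subset_union_right
  rw [shiftedEnergy_comp_swap]
  simp only [shiftedEnergy]
  rw [setIntegral_union hd2 (hm1.union hm2) (hu.mono_set subset_union_left) harms,
    setIntegral_union hd1 hm2 (harms.mono_set subset_union_left)
      (harms.mono_set subset_union_right)]

lemma shiftedEnergy_Gam {Λ : ℝ} (hR : 0 ≤ R)
    (hu : IntegrableOn (fun p => gradSq2 u p - Λ * u p ^ 2) Gam) :
    shiftedEnergy Λ Gam u = shiftedEnergy Λ (GamR R) u +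
      (shiftedEnergy Λ (Ici R ×ˢ II) u + shiftedEnergy Λ (Ici R ×ˢ II) (u ∘ Prod.swap)) := by
  have hGam : Gam = GamR R ∪ (Ici R ×ˢ II ∪ II ×ˢ Ici R) := by
    ext p
    simp only [mem_union, mem_prod, mem_Gam_iff, mem_GamR_iff, mem_Ici, II, mem_Ioo]
    grind
  conv_lhs => rw [hGam]
  refine shiftedEnergy_union_arms measurableSet_Ici (Ici_subset_Ici.2 hR) (fun p hp => ?_)
    (hGam ▸ hu)
  simp only [mem_GamR_iff] at hp
  simp [hp]

lemma shiftedEnergy_GamR {Λ : ℝ} (hR : 0 ≤ R)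
    (hu : IntegrableOn (fun p => gradSq2 u p - Λ * u p ^ 2) (GamR R)) :
    shiftedEnergy Λ (GamR R) u = shiftedEnergy Λ (GamR 0) u +
      (shiftedEnergy Λ (Ico 0 R ×ˢ II) u + shiftedEnergy Λ (Ico 0 R ×ˢ II) (u ∘ Prod.swap)) := by
  have hGamR : GamR R = GamR 0 ∪ (Ico 0 R ×ˢ II ∪ II ×ˢ Ico 0 R) := by
    ext p
    simp only [mem_union, mem_prod, mem_GamR_iff, mem_Ico, II, mem_Ioo]
    grind
  conv_lhs => rw [hGamR]
  refine shiftedEnergy_union_arms measurableSet_Ico (fun x hx => hx.1) (fun p hp => ?_)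
    (hGamR ▸ hu)
  simp only [mem_GamR_iff] at hp
  simp only [mem_Ico]
  grind

end Geometry

section Trial

variable {u v : ℝ × ℝ → ℝ} {Λ : ℝ} {S : Set (ℝ × ℝ)}

lemma gradSq2_eq_of_hasDerivAt {x y a b : ℝ} (hu : DifferentiableAt ℝ u (x, y))
    (hx : HasDerivAt (fun x => u (x, y)) a x) (hy : HasDerivAt (fun y => u (x, y)) b y) :
    gradSq2 u (x, y) = a ^ 2 + b ^ 2 := by
  have hx' := hu.hasFDerivAt.comp_hasDerivAt x ((hasDerivAt_id x).prodMk (hasDerivAt_const x y))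
  have hy' := hu.hasFDerivAt.comp_hasDerivAt y ((hasDerivAt_const y x).prodMk (hasDerivAt_id y))
  rw [gradSq2, hx.unique hx', hy.unique hy']

lemma gradSq2_congr {p : ℝ × ℝ} (h : u =ᶠ[nhds p] v) : gradSq2 u p = gradSq2 v p := by
  simp only [gradSq2, h.fderiv_eq]

lemma shiftedEnergy_congr_of_isOpen (hS : IsOpen S) (h : EqOn u v S) :
    shiftedEnergy Λ S u = shiftedEnergy Λ S v := by
  refine setIntegral_congr_fun hS.measurableSet fun p hp => ?_
  simp only [gradSq2_congr (h.eventuallyEq_of_mem (hS.mem_nhds hp)), h hp]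

lemma integrableOn_Ioo_prod_Ioo (hu : Continuous u) (a b c d : ℝ) :
    IntegrableOn u (Ioo a b ×ˢ Ioo c d) :=
  (hu.continuousOn.integrableOn_compact (isCompact_Icc.prod isCompact_Icc)).mono_set
    (prod_mono Ioo_subset_Icc_self Ioo_subset_Icc_self)

lemma shiftedEnergy_Ici_prod {T : Set ℝ} (hT : MeasurableSet T) {a c : ℝ}
    (hu : ∀ p : ℝ × ℝ, c < p.1 → u p = 0) :
    shiftedEnergy Λ (Ici a ×ˢ T) u = shiftedEnergy Λ (Ioo a c ×ˢ T) u := by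
  have hne : ∀ b : ℝ, ∀ᵐ p : ℝ × ℝ, p.1 ≠ b := fun b =>
    Measure.quasiMeasurePreserving_fst.ae (Measure.ae_ne volume b)
  refine setIntegral_eq_of_subset_of_ae_sdiff_eq_zero
    (measurableSet_Ici.prod hT).nullMeasurableSet
    (prod_mono_left fun x hx => hx.1.le) ?_
  filter_upwards [hne a, hne c] with p ha hc hp
  have hcp : c < p.1 := by
    simp only [mem_sdiff, mem_prod, mem_Ici, mem_Ioo] at hp
    grind
  have hev : u =ᶠ[nhds p] fun _ => 0 := by
    filter_upwards [(isOpen_lt continuous_const continuous_fst).mem_nhds hcp] using hu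
  rw [gradSq2_congr hev, hu p hcp]
  simp [gradSq2]

/-- The transverse ground state `-sin (π t)` of the Dirichlet Laplacian on `II`, extended by
zero. -/
def transverseMode (t : ℝ) : ℝ := -sin (π * max (-1) (min t 0))

/-- The longitudinal profile of the trial function: it grows linearly from `-1` to `0` and decays
linearly from `0` to `2`. -/
def tent (t : ℝ) : ℝ := max 0 (min (1 + t) (1 - t / 2))

/-- The trial function showing that the bend lowers the spectrum below `π²`. -/
def bendTrial (p : ℝ × ℝ) : ℝ :=
  transverseMode p.1 * tent p.2 + tent p.1 * transverseMode p.2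

lemma transverseMode_of_mem {t : ℝ} (ht : t ∈ II) : transverseMode t = -sin (π * t) := by
  rw [transverseMode, min_eq_left ht.2.le, max_eq_right ht.1.le]

lemma transverseMode_of_notMem {t : ℝ} (ht : t ∉ II) : transverseMode t = 0 := by
  rw [II, mem_Ioo, not_and_or, not_lt, not_lt] at ht
  rcases ht with h | h
  · rw [transverseMode, min_eq_left (by linarith), max_eq_left h]; simp
  · rw [transverseMode, min_eq_right h]; simp

lemma exists_lipschitzWith_transverseMode : ∃ K, LipschitzWith K transverseMode :=
  ⟨_, (Real.lipschitzWith_sin.comp <| (lipschitzWith_smul π).comp <|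
    (LipschitzWith.id.min_const 0).const_max (-1)).neg⟩

lemma lipschitzWith_tent : LipschitzWith 1 tent := by
  have hleft : LipschitzWith 1 fun t : ℝ => 1 + t := .of_dist_le_mul fun x y => by simp
  have hright : LipschitzWith 1 fun t : ℝ => 1 - t / 2 := .of_dist_le_mul fun x y => by
    have hxy : |1 - x / 2 - (1 - y / 2)| = |x - y| / 2 := by
      rw [← abs_neg, ← abs_two, ← abs_div]; ring_nf
    simp only [Real.dist_eq, NNReal.coe_one, one_mul, hxy]
    linarith [abs_nonneg (x - y)]
  have h := (hleft.min hright).const_max 0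
  rwa [max_self] at h

lemma exists_lipschitzWith_bendTrial : ∃ K, LipschitzWith K bendTrial := by
  obtain ⟨K, hs⟩ := exists_lipschitzWith_transverseMode
  have hg := lipschitzWith_tent
  have hs1 : ∀ t, ‖transverseMode t‖ ≤ (1 : NNReal) := fun t => by
    simpa [transverseMode] using abs_sin_le_one _
  have hg1 : ∀ t, ‖tent t‖ ≤ (1 : NNReal) := fun t => by
    simp only [tent, norm_eq_abs, NNReal.coe_one]
    grind
  have h1 := lipschitzWith_mul_of_norm_le (hs.comp (LipschitzWith.prod_fst (β := ℝ)))
    (hg.comp (LipschitzWith.prod_snd (α := ℝ))) (fun p => hs1 p.1) fun p => hg1 p.2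
  have h2 := lipschitzWith_mul_of_norm_le (hg.comp (LipschitzWith.prod_fst (β := ℝ)))
    (hs.comp (LipschitzWith.prod_snd (α := ℝ))) (fun p => hg1 p.1) fun p => hs1 p.2
  exact ⟨_, h1.add h2⟩

lemma tent_of_notMem {t : ℝ} (ht : t ∉ Icc (-1 : ℝ) 2) : tent t = 0 := by
  rw [mem_Icc] at ht
  rw [tent]
  grind

lemma bendTrial_eq_zero_of_two_lt {p : ℝ × ℝ} (hp : 2 < p.1) : bendTrial p = 0 := by
  simp [bendTrial, transverseMode_of_notMem fun h => (h.2.trans two_pos).not_gt hp,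
    tent_of_notMem fun h => h.2.not_gt hp]

lemma bendTrial_comp_swap : bendTrial ∘ Prod.swap = bendTrial := by
  ext p
  simp only [bendTrial, Function.comp_apply, Prod.fst_swap, Prod.snd_swap]
  ring

lemma support_bendTrial_subset : Function.support bendTrial ⊆ Gam := by
  intro p hp
  contrapose! hp
  rw [mem_Gam_iff] at hp
  have hzero : ∀ t : ℝ, t ≤ -1 → tent t = 0 := fun t ht => by rw [tent]; grind
  have hmode : ∀ t : ℝ, t ≤ -1 ∨ 0 ≤ t → transverseMode t = 0 := fun t ht =>
    transverseMode_of_notMem (by simpa [II, or_iff_not_imp_left] using ht)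
  rw [Function.notMem_support, bendTrial]
  grind

lemma hasCompactSupport_bendTrial : HasCompactSupport bendTrial := by
  refine .intro (isCompact_Icc.prod isCompact_Icc : IsCompact (Icc (-1 : ℝ) 2 ×ˢ Icc (-1 : ℝ) 2))
    fun p hp => ?_
  have hmode : ∀ t : ℝ, t ∉ Icc (-1 : ℝ) 2 → transverseMode t = 0 := fun t ht =>
    transverseMode_of_notMem fun h => ht ⟨h.1.le, (h.2.trans two_pos).le⟩
  rw [mem_prod, not_and_or] at hp
  rcases hp with h | h <;> simp [bendTrial, hmode _ h, tent_of_notMem h]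

lemma hasDerivAt_const_mul_self (c t : ℝ) : HasDerivAt (fun t => c * t) c t := by
  simpa using (hasDerivAt_id t).const_mul c

lemma integral_sq_sin_add : ∫ y in (-1 : ℝ)..0, (sin (π * y) ^ 2 + π * (1 + y) * sin (π * y))
    = -(1 / 2) := by
  rw [intervalIntegral.integral_eq_sub_of_hasDerivAt
    (f := fun y => y / 2 - sin (π * y) * cos (π * y) / (2 * π) - (1 + y) * cos (π * y)
      + sin (π * y) / π) (fun y _ => ?_) (Continuous.intervalIntegrable (by fun_prop) _ _)]
  · simp; norm_num
  · have hlin := hasDerivAt_const_mul_self π y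
    refine (((((hasDerivAt_id y).div_const 2).sub ((hlin.sin.mul hlin.cos).div_const (2 * π))).sub
      (((hasDerivAt_id y).const_add 1).mul hlin.cos)).add (hlin.sin.div_const π)).congr_deriv ?_
    have hpi := pi_ne_zero
    simp only [id]
    field_simp
    linear_combination -Real.sin_sq_add_cos_sq (π * y)

/-- The density `|∇w|² + w Δw` is the symmetrisation of `∂₁(w ∂₁w)`. -/
lemma shiftedEnergy_square_of_symmetric {w wx wxx : ℝ × ℝ → ℝ} {a b : ℝ} (hab : a ≤ b)
    (hw : Differentiable ℝ w) (hwx : ∀ x y, HasDerivAt (fun x => w (x, y)) (wx (x, y)) x)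
    (hwxx : ∀ x y, HasDerivAt (fun x => wx (x, y)) (wxx (x, y)) x) (hcx : Continuous wx)
    (hcxx : Continuous wxx) (hsymm : ∀ p, w p.swap = w p)
    (hΔ : ∀ p, wxx p + wxx p.swap = -(Λ * w p)) :
    shiftedEnergy Λ (Ioo a b ×ˢ Ioo a b) w
      = 2 * ∫ y in a..b, (w (b, y) * wx (b, y) - w (a, y) * wx (a, y)) := by
  set h : ℝ × ℝ → ℝ := fun p => wx p ^ 2 + w p * wxx p
  have hcont : Continuous h := (hcx.pow 2).add (hw.continuous.mul hcxx)
  have hgrad : ∀ p, gradSq2 w p = wx p ^ 2 + wx p.swap ^ 2 := fun p =>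
    gradSq2_eq_of_hasDerivAt (hw p) (hwx p.1 p.2) <|
      (hwx p.2 p.1).congr_of_eventuallyEq (.of_forall fun y => (hsymm (p.1, y)).symm)
  have hdens : ∀ p, gradSq2 w p - Λ * w p ^ 2 = h p + h p.swap := fun p => by
    simp only [hgrad, h, hsymm]
    linear_combination -w p * hΔ p
  have hslice : ∀ y, ∫ x in Ioo a b, h (x, y) = w (b, y) * wx (b, y) - w (a, y) * wx (a, y) :=
    fun y => by
      rw [integral_Ioo_eq_intervalIntegral hab]
      exact intervalIntegral.integral_eq_sub_of_hasDerivAt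
        (fun x _ => ((hwx x y).mul (hwxx x y)).congr_deriv (by simp only [h]; ring))
        (Continuous.intervalIntegrable (by fun_prop) _ _)
  have hswap := setIntegral_prod_swap (μ := volume) (ν := volume) (Ioo a b) (Ioo a b) h
  have hint := integrableOn_Ioo_prod_Ioo hcont a b a b
  have hint_swap := integrableOn_Ioo_prod_Ioo (u := fun p => h p.swap) (by fun_prop) a b a b
  rw [Measure.volume_eq_prod] at hint hint_swap
  simp only [shiftedEnergy, hdens, Measure.volume_eq_prod]
  rw [integral_add hint hint_swap, hswap, ← two_mul, ← hswap,
    setIntegral_prod _ hint_swap, ← integral_Ioo_eq_intervalIntegral hab]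
  simp only [Prod.swap_prod_mk, hslice]

lemma shiftedEnergy_bendTrial_GamR_zero : shiftedEnergy (π ^ 2) (GamR 0) bendTrial = -1 := by
  set w : ℝ × ℝ → ℝ := fun p => -(1 + p.2) * sin (π * p.1) - (1 + p.1) * sin (π * p.2)
  set wx : ℝ × ℝ → ℝ := fun p => -(1 + p.2) * (π * cos (π * p.1)) - sin (π * p.2)
  have hw : EqOn bendTrial w (II ×ˢ II) := fun p hp => by
    have htent : ∀ t ∈ II, tent t = 1 + t := fun t ht => by
      rw [II, mem_Ioo] at ht
      rw [tent]
      grind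
    simp only [bendTrial, w, transverseMode_of_mem hp.1, transverseMode_of_mem hp.2,
      htent _ hp.1, htent _ hp.2]
    ring
  have hwx : ∀ x y, HasDerivAt (fun x => w (x, y)) (wx (x, y)) x := fun x y =>
    (((hasDerivAt_const_mul_self π x).sin.const_mul (-(1 + y))).sub
      (((hasDerivAt_id x).const_add 1).mul_const (sin (π * y)))).congr_deriv
        (by simp [wx, mul_comm])
  have hwxx : ∀ x y, HasDerivAt (fun x => wx (x, y)) ((1 + y) * (π ^ 2 * sin (π * x))) x :=
    fun x y => ((((hasDerivAt_const_mul_self π x).cos.const_mul π).const_mul (-(1 + y))).sub_const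
      (sin (π * y))).congr_deriv (by ring)
  rw [GamR_zero, shiftedEnergy_congr_of_isOpen (isOpen_II.prod isOpen_II) hw]
  refine (shiftedEnergy_square_of_symmetric (by norm_num) (by fun_prop) hwx
    (wxx := fun p => (1 + p.2) * (π ^ 2 * sin (π * p.1))) hwxx (by fun_prop) (by fun_prop)
    (fun p => by simp only [w, Prod.fst_swap, Prod.snd_swap]; ring)
    fun p => by simp only [w, Prod.fst_swap, Prod.snd_swap]; ring).trans ?_
  rw [intervalIntegral.integral_congr (g := fun y => sin (π * y) ^ 2 + π * (1 + y) * sin (π * y))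
    fun y _ => by simp [w, wx]; ring, integral_sq_sin_add]
  norm_num

lemma shiftedEnergy_bendTrial_arm :
    shiftedEnergy (π ^ 2) (Ici 0 ×ˢ II) bendTrial = 1 / 4 := by
  set v : ℝ × ℝ → ℝ := fun p => -(1 - p.1 / 2) * sin (π * p.2)
  have hv : EqOn bendTrial v (Ioo 0 2 ×ˢ II) := fun p hp => by
    have htent : tent p.1 = 1 - p.1 / 2 := by
      have := hp.1.1
      have := hp.1.2
      rw [tent]
      grind
    simp only [bendTrial, transverseMode_of_notMem fun h => h.2.not_gt hp.1.1, htent,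
      transverseMode_of_mem hp.2, v]
    ring
  have hdens : ∀ p, gradSq2 v p - π ^ 2 * v p ^ 2 = sin (π * p.2) ^ 2 / 4
      + (1 - p.1 / 2) ^ 2 * (π ^ 2 * (cos (π * p.2) ^ 2 - sin (π * p.2) ^ 2)) := fun p => by
    have hx : HasDerivAt (fun x => v (x, p.2)) (-(-(1 / 2)) * sin (π * p.2)) p.1 :=
      (((hasDerivAt_id' p.1).div_const 2).const_sub 1).fun_neg.mul_const (sin (π * p.2))
    have hy : HasDerivAt (fun y => v (p.1, y)) (-(1 - p.1 / 2) * (cos (π * p.2) * π)) p.2 :=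
      (hasDerivAt_const_mul_self π p.2).sin.const_mul (-(1 - p.1 / 2))
    rw [gradSq2_eq_of_hasDerivAt (by fun_prop) hx hy]
    simp only [v]
    ring
  have hslice : ∀ x, ∫ y in II, (sin (π * y) ^ 2 / 4
      + (1 - x / 2) ^ 2 * (π ^ 2 * (cos (π * y) ^ 2 - sin (π * y) ^ 2))) = 1 / 8 := fun x => by
    rw [II, integral_Ioo_eq_intervalIntegral (by norm_num), intervalIntegral.integral_comp_mul_left
      (fun z => sin z ^ 2 / 4 + (1 - x / 2) ^ 2 * (π ^ 2 * (cos z ^ 2 - sin z ^ 2))) pi_ne_zero,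
      intervalIntegral.integral_add (Continuous.intervalIntegrable (by fun_prop) _ _)
        (Continuous.intervalIntegrable (by fun_prop) _ _)]
    simp only [intervalIntegral.integral_div, intervalIntegral.integral_const_mul, integral_sin_sq,
      integral_cos_sq_sub_sin_sq]
    have hpi := pi_ne_zero
    simp
    field_simp
    norm_num
  rw [shiftedEnergy_Ici_prod measurableSet_II fun p hp => bendTrial_eq_zero_of_two_lt hp,
    shiftedEnergy_congr_of_isOpen (isOpen_Ioo.prod isOpen_II) hv]
  simp only [shiftedEnergy, hdens, Measure.volume_eq_prod]
  rw [setIntegral_prod _ (by exact integrableOn_Ioo_prod_Ioo (by fun_prop) 0 2 (-1) 0)]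
  simp only [hslice]
  norm_num

lemma lamG_lt_pi_sq : lamG < π ^ 2 := by
  obtain ⟨K, hK⟩ := exists_lipschitzWith_bendTrial
  have hc := hasCompactSupport_bendTrial
  have henergy : shiftedEnergy (π ^ 2) Gam bendTrial = -(1 / 2) := by
    rw [shiftedEnergy_Gam le_rfl, bendTrial_comp_swap, shiftedEnergy_bendTrial_GamR_zero,
      shiftedEnergy_bendTrial_arm]
    · norm_num
    · exact (integrable_gradSq2_sub_of_lipschitz hK hc _).integrableOn
  rw [shiftedEnergy_eq_sub_of_lipschitz hK hc] at henergy
  have hG := lamG_mul_integral_sq_le hK hc support_bendTrial_subset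
  have hsq : 0 ≤ ∫ p in Gam, bendTrial p ^ 2 := integral_nonneg fun _ => sq_nonneg _
  by_contra! h
  nlinarith

end Trial

section Bracketing

lemma exists_contDiff_setIntegral_sq_ne_zero {E : Type*} [NormedAddCommGroup E] [NormedSpace ℝ E]
    [FiniteDimensional ℝ E] [MeasurableSpace E] [BorelSpace E] (μ : Measure E)
    [μ.IsOpenPosMeasure] [IsFiniteMeasureOnCompacts μ] (n : ℕ∞) {U : Set E} (hU : IsOpen U)
    (hne : U.Nonempty) : ∃ u : E → ℝ, ContDiff ℝ n u ∧ HasCompactSupport u ∧ tsupport u ⊆ U ∧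
      (∫ x in U, u x ^ 2 ∂μ) ≠ 0 := by
  obtain ⟨x, hx⟩ := hne
  obtain ⟨u, hsupp, hc, hu, -, hux⟩ := exists_contDiff_tsupport_subset (n := n) (hU.mem_nhds hx)
  refine ⟨u, hu, hc, hsupp, ?_⟩
  rw [setIntegral_eq_integral_of_forall_compl_eq_zero fun y hy => by
    rw [image_eq_zero_of_notMem_tsupport fun h => hy (hsupp h), zero_pow two_ne_zero]]
  have hc2 : HasCompactSupport fun y => u y ^ 2 :=
    hc.comp_left (g := fun t : ℝ => t ^ 2) (zero_pow two_ne_zero)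
  refine (Continuous.integral_pos_of_hasCompactSupport_nonneg_nonzero (x := x)
    (hu.continuous.pow 2) hc2 (fun y => sq_nonneg (u y)) ?_).ne'
  simp [hux]

variable {u : ℝ × ℝ → ℝ} {Λ R : ℝ}

lemma exists_mem_Gam_trial_ne_zero :
    ∃ u ∈ {u : ℝ × ℝ → ℝ | ContDiff ℝ 1 u ∧ HasCompactSupport u ∧ tsupport u ⊆ Gam},
      (∫ p in Gam, u p ^ 2) ≠ 0 := by
  obtain ⟨u, hu, hc, hs, hne⟩ := exists_contDiff_setIntegral_sq_ne_zero
    (E := ℝ × ℝ) volume 1 isOpen_Gam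
    ⟨((-1 / 2 : ℝ), (-1 / 2 : ℝ)), by norm_num [mem_Gam_iff]⟩
  exact ⟨u, ⟨hu, hc, hs⟩, hne⟩

lemma exists_admR_ne_zero (hR : 0 ≤ R) : ∃ u ∈ {u | AdmR R u}, (∫ p in GamR R, u p ^ 2) ≠ 0 := by
  obtain ⟨u, hu, -, hs, hne⟩ := exists_contDiff_setIntegral_sq_ne_zero volume 1 (isOpen_GamR R)
    ⟨((-1 / 2 : ℝ), (-1 / 2 : ℝ)), by rw [mem_GamR_iff]; norm_num; linarith⟩
  exact ⟨u, admR_of_tsupport_subset hu (hs.trans inter_subset_left) R, hne⟩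

lemma shiftedEnergy_strip_nonneg (hu : ContDiff ℝ 1 u) {J : Set ℝ} (hJ : MeasurableSet J)
    {c d : ℝ} (hcd : c < d) (hu0 : ∀ x ∈ J, u (x, c) = 0 ∧ u (x, d) = 0)
    (hΛ : Λ ≤ (π / (d - c)) ^ 2) : 0 ≤ shiftedEnergy Λ (J ×ˢ Ioo c d) u := by
  have hcont : ∀ v, Continuous fun p => fderiv ℝ u p v := continuous_fderiv_apply_const hu
  have hgrad := continuous_gradSq2 hu
  have huc := hu.continuous
  rw [shiftedEnergy, Measure.volume_eq_prod]
  refine setIntegral_prod_nonneg hJ fun x hx => ?_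
  rw [integral_Ioo_eq_intervalIntegral hcd.le]
  refine (poincare_interval hcd (fun y _ => hasDerivAt_right (hu.differentiable one_ne_zero) x y)
    ((hcont _).comp (by fun_prop)).continuousOn (hu0 x hx).1 (hu0 x hx).2).trans
    (intervalIntegral.integral_mono_on hcd.le (Continuous.intervalIntegrable (by fun_prop) _ _)
      (Continuous.intervalIntegrable (by fun_prop) _ _) fun y _ => ?_)
  have := mul_le_mul_of_nonneg_right hΛ (sq_nonneg (u (x, y)))
  have := sq_nonneg (fderiv ℝ u (x, y) (1, 0))
  simp only [gradSq2]
  linarith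

lemma shiftedEnergy_arm_nonneg (hu : ContDiff ℝ 1 u) (hΛ : Λ ≤ π ^ 2) {J : Set ℝ}
    (hJ : MeasurableSet J) (hu0 : ∀ x ∈ J, u (x, -1) = 0 ∧ u (x, 0) = 0) :
    0 ≤ shiftedEnergy Λ (J ×ˢ II) u :=
  shiftedEnergy_strip_nonneg hu hJ (by norm_num) hu0 (by simpa using hΛ)

/-- A cut imposes no condition, so it can only lower the eigenvalue, provided the half-strips
that are cut off have nonnegative energy. -/
lemma lamR_le_lamG (hR : 0 ≤ R) : lamR R ≤ lamG := by
  suffices h : min (lamR R) (π ^ 2) ≤ lamG by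
    exact (min_le_iff.1 h).resolve_right lamG_lt_pi_sq.not_ge
  set Λ := min (lamR R) (π ^ 2)
  rw [lamG_eq_rayleighInf]
  refine le_rayleighInf exists_mem_Gam_trial_ne_zero fun u ⟨hu, hc, hs⟩ => ?_
  obtain ⟨K, hK⟩ := hu.lipschitzWith_of_hasCompactSupport hc one_ne_zero
  have hu0 : ∀ p ∉ Gam, u p = 0 := fun p hp => image_eq_zero_of_notMem_tsupport fun h => hp (hs h)
  have hcore : 0 ≤ shiftedEnergy Λ (GamR R) u := by
    rw [shiftedEnergy_eq_sub_of_lipschitz hK hc, sub_nonneg]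
    exact (mul_le_mul_of_nonneg_right (min_le_left _ _)
      (integral_nonneg fun _ => sq_nonneg _)).trans
      (rayleighInf_mul_integral_sq_le (admR_of_tsupport_subset hu hs R))
  have harm : ∀ v : ℝ × ℝ → ℝ, ContDiff ℝ 1 v → (∀ p ∉ Gam, v p = 0) →
      0 ≤ shiftedEnergy Λ (Ici R ×ˢ II) v := fun v hv hv0 => by
    refine shiftedEnergy_arm_nonneg hv (min_le_right _ _) measurableSet_Ici fun x hx => ?_
    have hx0 : 0 ≤ x := hR.trans hx
    exact ⟨hv0 _ (by simp [mem_Gam_iff]), hv0 _ (by simp [mem_Gam_iff, hx0])⟩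
  have harm1 := harm u hu hu0
  have harm2 := harm (u ∘ Prod.swap) (hu.comp (contDiff_snd.prodMk contDiff_fst)) fun p hp =>
    hu0 _ (by simpa [mem_Gam_iff, and_comm, or_comm] using hp)
  have hsplit := shiftedEnergy_Gam (Λ := Λ) hR
    (integrable_gradSq2_sub_of_lipschitz hK hc Λ).integrableOn
  rw [shiftedEnergy_eq_sub_of_lipschitz hK hc] at hsplit
  linarith

end Bracketing

section Retraction

variable {R : ℝ} {u : ℝ × ℝ → ℝ}

/-- A Lipschitz retraction of the plane onto the closure of `Γ_R`: translate along the diagonal into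
the closure of `Γ`, then clamp at the cuts. The complement of `Γ` is sent to the lateral boundary,
so `u ∘ guideRetract R` vanishes there for admissible `u`. -/
def guideRetract (R : ℝ) (p : ℝ × ℝ) : ℝ × ℝ :=
  (min R (p.1 + (max (-1) (min (min p.1 p.2) 0) - min p.1 p.2)),
    min R (p.2 + (max (-1) (min (min p.1 p.2) 0) - min p.1 p.2)))

lemma min_guideRetract (hR : 0 ≤ R) (p : ℝ × ℝ) :
    min (guideRetract R p).1 (guideRetract R p).2 = max (-1) (min (min p.1 p.2) 0) := by
  simp only [guideRetract]
  rw [min_min_min_comm, min_self, min_add_add_right, add_sub_cancel, min_eq_right]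
  exact max_le (by linarith) ((min_le_right _ _).trans hR)

lemma guideRetract_eq_self {p : ℝ × ℝ} (hp : p ∈ Gam) (h1 : p.1 ≤ R) (h2 : p.2 ≤ R) :
    guideRetract R p = p := by
  have h : max (-1) (min (min p.1 p.2) 0) = min p.1 p.2 := by
    rw [min_eq_left hp.2.le, max_eq_right hp.1.le]
  simp [guideRetract, h, h1, h2]

lemma guideRetract_mem (hR : 0 ≤ R) (p : ℝ × ℝ) :
    guideRetract R p ∈ Icc (-1) R ×ˢ Icc (-1) R := by
  have h : -1 ≤ min (guideRetract R p).1 (guideRetract R p).2 := by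
    rw [min_guideRetract hR]
    exact le_max_left _ _
  exact ⟨⟨(le_min_iff.1 h).1, min_le_left _ _⟩, (le_min_iff.1 h).2, min_le_left _ _⟩

lemma exists_lipschitzWith_guideRetract (R : ℝ) : ∃ K, LipschitzWith K (guideRetract R) := by
  have hmin : LipschitzWith _ fun p : ℝ × ℝ => min p.1 p.2 :=
    LipschitzWith.prod_fst.min LipschitzWith.prod_snd
  have hshift := ((hmin.min_const 0).const_max (-1)).sub hmin
  exact ⟨_, ((LipschitzWith.prod_fst.add hshift).const_min R).prodMk
    ((LipschitzWith.prod_snd.add hshift).const_min R)⟩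

lemma guideRetract_swap (R : ℝ) (p : ℝ × ℝ) : guideRetract R p.swap = (guideRetract R p).swap := by
  simp [guideRetract, min_comm]

lemma AdmR.guideRetract_eq_zero (hu : AdmR R u) (hR : 0 < R) {p : ℝ × ℝ} (hp : p ∉ Gam) :
    u (guideRetract R p) = 0 := by
  obtain ⟨⟨-, h1⟩, -, h2⟩ := guideRetract_mem hR.le p
  refine hu.eq_zero hR ?_ h1 h2
  rw [min_guideRetract hR.le]
  by_cases h : -1 < min p.1 p.2
  · have hnn : 0 ≤ min p.1 p.2 := not_lt.1 fun h' => hp ⟨h, h'⟩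
    right
    rw [min_eq_right hnn, max_eq_right (by norm_num)]
  · left
    exact max_eq_left ((min_le_left _ _).trans (not_lt.1 h))

lemma exists_lipschitzWith_comp_of_convex_of_isCompact {X E F : Type*} [PseudoEMetricSpace X]
    [NormedAddCommGroup E] [NormedSpace ℝ E] [NormedAddCommGroup F] [NormedSpace ℝ F]
    {f : E → F} (hf : ContDiff ℝ 1 f) {Q : Set E} (hQ : Convex ℝ Q) (hQc : IsCompact Q)
    {g : X → E} {K : NNReal} (hg : LipschitzWith K g) (hgQ : ∀ x, g x ∈ Q) :
    (∃ K', LipschitzWith K' (f ∘ g)) ∧ ∃ C : NNReal, ∀ x, ‖f (g x)‖ ≤ C := by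
  obtain ⟨L, hL⟩ := hf.contDiffOn.exists_lipschitzOnWith one_ne_zero hQ hQc
  obtain ⟨C, hC⟩ := hQc.exists_bound_of_continuousOn hf.continuous.continuousOn
  exact ⟨⟨L * K, lipschitzOnWith_univ.1 (hL.comp hg.lipschitzOnWith fun x _ => hgQ x)⟩,
    C.toNNReal, fun x => (hC _ (hgQ x)).trans (Real.le_coe_toNNReal C)⟩

end Retraction

section Extension

/-- A cut-off along an arm: equal to `1` up to the core and to `0` from the end `2 R` of the doubled
arm on. -/
structure IsArmCutoff (R : ℝ) (χ : ℝ → ℝ) : Prop where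
  exists_lipschitzWith : ∃ K, LipschitzWith K χ
  abs_le_one : ∀ t, |χ t| ≤ 1
  eq_one : ∀ t ≤ 0, χ t = 1
  eq_zero : ∀ t, 2 * R ≤ t → χ t = 0

/-- The trial function for the infinite guide built from `u` on `Γ_R`: extend `u` evenly across the
cuts and damp it by `χ` along the doubled arms. The composition with `guideRetract` only serves to
make the formula Lipschitz on the whole plane. -/
def reflectedExtension (R : ℝ) (χ : ℝ → ℝ) (u : ℝ × ℝ → ℝ) (p : ℝ × ℝ) : ℝ :=
  χ p.1 * χ p.2 * u (guideRetract R (min p.1 (2 * R - p.1), min p.2 (2 * R - p.2)))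

variable {R : ℝ} {χ : ℝ → ℝ} {u : ℝ × ℝ → ℝ}

lemma reflectedExtension_comp_swap (R : ℝ) (χ : ℝ → ℝ) (u : ℝ × ℝ → ℝ) :
    reflectedExtension R χ u ∘ Prod.swap = reflectedExtension R χ (u ∘ Prod.swap) := by
  funext p
  simp only [reflectedExtension, Function.comp_apply, ← guideRetract_swap, Prod.swap_prod_mk,
    Prod.fst_swap, Prod.snd_swap, mul_comm (χ p.1)]

lemma exists_lipschitzWith_reflectedExtension (hχ : IsArmCutoff R χ) (hR : 0 ≤ R)
    (hu : ContDiff ℝ 1 u) : ∃ K, LipschitzWith K (reflectedExtension R χ u) := by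
  obtain ⟨K, hK⟩ := hχ.exists_lipschitzWith
  obtain ⟨L, hL⟩ := exists_lipschitzWith_guideRetract R
  have hfold : LipschitzWith _ fun t : ℝ => min t (2 * R - t) :=
    LipschitzWith.id.min ((LipschitzWith.const (2 * R)).sub LipschitzWith.id)
  have hfold2 := (hfold.comp (LipschitzWith.prod_fst (β := ℝ))).prodMk
    (hfold.comp (LipschitzWith.prod_snd (α := ℝ)))
  obtain ⟨⟨M, hM⟩, C, hC⟩ := exists_lipschitzWith_comp_of_convex_of_isCompact hu
    ((convex_Icc (-1) R).prod (convex_Icc (-1) R)) (isCompact_Icc.prod isCompact_Icc)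
    (hL.comp hfold2) fun p => guideRetract_mem hR _
  have hχ1 : ∀ t, ‖χ t‖ ≤ (1 : NNReal) := hχ.abs_le_one
  have hχχ := lipschitzWith_mul_of_norm_le (hK.comp (LipschitzWith.prod_fst (β := ℝ)))
    (hK.comp (LipschitzWith.prod_snd (α := ℝ))) (fun p => hχ1 p.1) fun p => hχ1 p.2
  refine ⟨_, lipschitzWith_mul_of_norm_le (A := 1) hχχ hM (fun p => ?_) hC⟩
  rw [norm_mul]
  exact mul_le_one₀ (hχ1 p.1) (norm_nonneg _) (hχ1 p.2)

lemma reflectedExtension_eq_zero (hχ : IsArmCutoff R χ) {p : ℝ × ℝ}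
    (hp : 2 * R ≤ p.1 ∨ 2 * R ≤ p.2) : reflectedExtension R χ u p = 0 := by
  rcases hp with h | h <;> simp [reflectedExtension, hχ.eq_zero _ h]

lemma support_reflectedExtension_subset (hχ : IsArmCutoff R χ) (hR : 0 < R) (hu : AdmR R u) :
    Function.support (reflectedExtension R χ u) ⊆ Gam := by
  refine Function.support_subset_iff'.2 fun p hp => ?_
  by_cases h : 2 * R ≤ p.1 ∨ 2 * R ≤ p.2
  · exact reflectedExtension_eq_zero hχ h
  push Not at h
  rw [reflectedExtension, hu.guideRetract_eq_zero hR, mul_zero]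
  simp only [mem_Gam_iff, lt_min_iff, min_lt_iff] at hp ⊢
  grind

lemma hasCompactSupport_reflectedExtension (hχ : IsArmCutoff R χ) (hR : 0 < R) (hu : AdmR R u) :
    HasCompactSupport (reflectedExtension R χ u) := by
  refine HasCompactSupport.intro (isCompact_Icc (a := ((-1, -1) : ℝ × ℝ)) (b := (2 * R, 2 * R)))
    fun p hp => by_contra fun h => hp ?_
  have hG := mem_Gam_iff.1 (support_reflectedExtension_subset hχ hR hu h)
  have hcut := mt (reflectedExtension_eq_zero (u := u) hχ) h
  push Not at hcut
  exact ⟨⟨hG.1.1.le, hG.1.2.le⟩, hcut.1.le, hcut.2.le⟩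

lemma reflectedExtension_of_mem (hχ : IsArmCutoff R χ) {p : ℝ × ℝ} (hp : p ∈ Gam)
    (h1 : p.1 ≤ R) (h2 : p.2 ≤ 0) (hR : 0 ≤ R) :
    reflectedExtension R χ u p = χ p.1 * u p := by
  rw [reflectedExtension, hχ.eq_one _ h2, min_eq_left (by linarith), min_eq_left (by linarith),
    guideRetract_eq_self hp h1 (h2.trans hR), mul_one]

lemma reflectedExtension_reflect_of_mem (hχ : IsArmCutoff R χ) {p : ℝ × ℝ} (hp : p ∈ Gam)
    (h1 : p.1 ≤ R) (h2 : p.2 ≤ 0) (hR : 0 ≤ R) :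
    reflectedExtension R χ u (2 * R - p.1, p.2) = χ (2 * R - p.1) * u p := by
  rw [reflectedExtension, hχ.eq_one _ h2, sub_sub_cancel, min_eq_right (by linarith),
    min_eq_left (by linarith), guideRetract_eq_self hp h1 (h2.trans hR), mul_one]

lemma gradSq2_comp_reflect (c : ℝ) (w : ℝ × ℝ → ℝ) (p : ℝ × ℝ) :
    gradSq2 (fun p => w (c - p.1, p.2)) p = gradSq2 w (c - p.1, p.2) := by
  let L : (ℝ × ℝ) ≃L[ℝ] ℝ × ℝ := (ContinuousLinearEquiv.neg ℝ).prodCongr (.refl ℝ ℝ)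
  have hw : (fun p : ℝ × ℝ => w (c - p.1, p.2)) = (fun q => w ((c, 0) + q)) ∘ L := by
    funext p
    simp [L, sub_eq_add_neg]
  have hp : (c, (0 : ℝ)) + L p = (c - p.1, p.2) := by simp [L, sub_eq_add_neg]
  have h1 : L (1, 0) = -(1, 0) := by simp [L]
  have h2 : L (0, 1) = (0, 1) := by simp [L]
  simp only [gradSq2, hw, L.comp_right_fderiv, fderiv_comp_add_left, hp,
    ContinuousLinearMap.comp_apply, ContinuousLinearEquiv.coe_coe, h1, h2, map_neg, neg_sq]

lemma shiftedEnergy_comp_reflect (Λ c a b : ℝ) (T : Set ℝ) (w : ℝ × ℝ → ℝ) :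
    shiftedEnergy Λ (Ioo a b ×ˢ T) (fun p => w (c - p.1, p.2)) =
      shiftedEnergy Λ (Ioo (c - b) (c - a) ×ˢ T) w := by
  let e : ℝ × ℝ ≃ᵐ ℝ × ℝ := (MeasurableEquiv.subLeft c).prodCongr (MeasurableEquiv.refl ℝ)
  have he : MeasurePreserving e volume volume :=
    (Measure.measurePreserving_sub_left volume c).prod (MeasurePreserving.id volume)
  have hpre : e ⁻¹' (Ioo (c - b) (c - a) ×ˢ T) = Ioo a b ×ˢ T := by
    ext p
    change (c - b < c - p.1 ∧ c - p.1 < c - a) ∧ p.2 ∈ T ↔ (a < p.1 ∧ p.1 < b) ∧ p.2 ∈ T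
    grind
  simp only [shiftedEnergy, gradSq2_comp_reflect]
  rw [← hpre]
  exact he.setIntegral_preimage_emb e.measurableEmbedding (fun p => gradSq2 w p - Λ * w p ^ 2) _

lemma shiftedEnergy_Ioo_two_mul_prod {Λ : ℝ} (hR : 0 ≤ R) {T : Set ℝ} (hT : MeasurableSet T)
    {w : ℝ × ℝ → ℝ} (hw : Integrable fun p => gradSq2 w p - Λ * w p ^ 2) :
    shiftedEnergy Λ (Ioo 0 (2 * R) ×ˢ T) w = shiftedEnergy Λ (Ioo 0 R ×ˢ T) w +
      shiftedEnergy Λ (Ioo 0 R ×ˢ T) (fun p => w (2 * R - p.1, p.2)) := by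
  have hunion : (Ioc 0 R ×ˢ T : Set (ℝ × ℝ)) ∪ Ioo R (2 * R) ×ˢ T = Ioo 0 (2 * R) ×ˢ T := by
    rw [← union_prod]
    congr 1
    ext t
    simp only [mem_union, mem_Ioc, mem_Ioo]
    grind
  have hdisj : Disjoint (Ioc 0 R ×ˢ T : Set (ℝ × ℝ)) (Ioo R (2 * R) ×ˢ T) :=
    disjoint_left.2 fun p h h' => absurd h.1.2 (not_le.2 h'.1.1)
  have hae : (Ioc 0 R ×ˢ T : Set (ℝ × ℝ)) =ᵐ[volume] Ioo 0 R ×ˢ T :=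
    Measure.set_prod_ae_eq Ioo_ae_eq_Ioc.symm (ae_eq_refl T)
  rw [shiftedEnergy_comp_reflect, two_mul, add_sub_cancel_right, sub_zero, ← two_mul, shiftedEnergy,
    ← hunion, setIntegral_union hdisj (measurableSet_Ioo.prod hT) hw.integrableOn hw.integrableOn,
    setIntegral_congr_set hae, shiftedEnergy, shiftedEnergy]

lemma shiftedEnergy_reflectedExtension_arm (hχ : IsArmCutoff R χ) (hR : 0 < R) (hu : AdmR R u)
    (Λ : ℝ) :
    shiftedEnergy Λ (Ici 0 ×ˢ II) (reflectedExtension R χ u) =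
      shiftedEnergy Λ (Ioo 0 R ×ˢ II) (fun p => χ p.1 * u p) +
        shiftedEnergy Λ (Ioo 0 R ×ˢ II) (fun p => χ (2 * R - p.1) * u p) := by
  have hopen : IsOpen (Ioo 0 R ×ˢ II) := isOpen_Ioo.prod isOpen_II
  have hGam : ∀ p ∈ Ioo 0 R ×ˢ II, p ∈ Gam := fun p hp =>
    mem_Gam_iff.2 ⟨⟨by linarith [hp.1.1], hp.2.1⟩, Or.inr hp.2.2⟩
  obtain ⟨K, hK⟩ := exists_lipschitzWith_reflectedExtension hχ hR.le hu.1
  have hc := hasCompactSupport_reflectedExtension hχ hR hu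
  rw [shiftedEnergy_Ici_prod (c := 2 * R) measurableSet_II
    fun p hp => reflectedExtension_eq_zero hχ (Or.inl hp.le),
    shiftedEnergy_Ioo_two_mul_prod hR.le measurableSet_II
      (integrable_gradSq2_sub_of_lipschitz hK hc Λ),
    shiftedEnergy_congr_of_isOpen hopen fun p hp =>
      reflectedExtension_of_mem hχ (hGam p hp) hp.1.2.le hp.2.2.le hR.le,
    shiftedEnergy_congr_of_isOpen hopen fun p hp =>
      reflectedExtension_reflect_of_mem hχ (hGam p hp) hp.1.2.le hp.2.2.le hR.le]

lemma shiftedEnergy_reflectedExtension (hχ : IsArmCutoff R χ) (hR : 0 < R) (hu : AdmR R u)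
    (Λ : ℝ) :
    shiftedEnergy Λ Gam (reflectedExtension R χ u) = shiftedEnergy Λ (GamR 0) u +
      (shiftedEnergy Λ (Ici 0 ×ˢ II) (reflectedExtension R χ u) +
        shiftedEnergy Λ (Ici 0 ×ˢ II) (reflectedExtension R χ (u ∘ Prod.swap))) := by
  obtain ⟨K, hK⟩ := exists_lipschitzWith_reflectedExtension hχ hR.le hu.1
  have hc := hasCompactSupport_reflectedExtension hχ hR hu
  rw [shiftedEnergy_Gam le_rfl (integrable_gradSq2_sub_of_lipschitz hK hc Λ).integrableOn,
    reflectedExtension_comp_swap, shiftedEnergy_congr_of_isOpen (isOpen_GamR 0) fun p hp => ?_]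
  obtain ⟨-, -, h1, h2⟩ := mem_GamR_iff.1 hp
  rw [reflectedExtension_of_mem hχ hp.1 (h1.le.trans hR.le) h2.le hR.le, hχ.eq_one _ h1.le, one_mul]

end Extension

section TanhCutoff

lemma hasDerivAt_tanh (x : ℝ) : HasDerivAt tanh (1 - tanh x ^ 2) x := by
  rw [show tanh = fun x => sinh x / cosh x from funext tanh_eq_sinh_div_cosh]
  refine ((hasDerivAt_sinh x).div (hasDerivAt_cosh x) (cosh_pos x).ne').congr_deriv ?_
  have := (cosh_pos x).ne'
  field_simp

lemma strictMono_tanh : StrictMono tanh :=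
  strictMono_of_deriv_pos fun x => by
    rw [(hasDerivAt_tanh x).deriv]
    linarith [tanh_sq_lt_one x]

lemma tanh_pos {x : ℝ} (hx : 0 < x) : 0 < tanh x := by
  simpa using strictMono_tanh hx

lemma tanh_le_inv_tanh {x : ℝ} (hx : 0 < x) : tanh x ≤ (tanh x)⁻¹ :=
  (tanh_lt_one x).le.trans ((one_le_inv₀ (tanh_pos hx)).2 (tanh_lt_one x).le)

lemma lipschitzWith_tanh : LipschitzWith 1 tanh := by
  refine lipschitzWith_of_nnnorm_deriv_le (fun x => (hasDerivAt_tanh x).differentiableAt)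
    fun x => ?_
  rw [(hasDerivAt_tanh x).deriv, ← NNReal.coe_le_coe, coe_nnnorm, norm_eq_abs, NNReal.coe_one,
    abs_le]
  constructor <;> linarith [tanh_sq_lt_one x, sq_nonneg (tanh x)]

/-- The transition from `1` at `t = 0` through `0` at the cut `t = R` to `-1` at `t = 2 R` from
which the cut-off is built. -/
def tanhTransition (ω R t : ℝ) : ℝ :=
  tanh (ω * (R - t)) / tanh (ω * R)

/-- The arm cut-off `(1 + σ) / 2`, where `σ` is `tanhTransition` clamped to `[-1, 1]`. -/
def tanhCutoff (ω R t : ℝ) : ℝ :=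
  (1 + max (-1) (min 1 (tanhTransition ω R t))) / 2

variable {ω R t : ℝ}

lemma hasDerivAt_tanhTransition (hk : tanh (ω * R) ≠ 0) (t : ℝ) :
    HasDerivAt (tanhTransition ω R)
      (-(ω * ((tanh (ω * R))⁻¹ - tanh (ω * R) * tanhTransition ω R t ^ 2))) t := by
  have hinner : HasDerivAt (fun t => ω * (R - t)) (ω * -1) t :=
    ((hasDerivAt_id' t).const_sub R).const_mul ω
  refine (((hasDerivAt_tanh _).comp t hinner).div_const (tanh (ω * R))).congr_deriv ?_
  simp only [tanhTransition]
  field_simp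

lemma contDiff_tanhTransition (ω R : ℝ) : ContDiff ℝ 1 (tanhTransition ω R) := by
  unfold tanhTransition
  simp only [tanh_eq_sinh_div_cosh (ω * (R - _))]
  fun_prop (disch := exact fun _ => (cosh_pos _).ne')

lemma tanhTransition_zero (hk : tanh (ω * R) ≠ 0) : tanhTransition ω R 0 = 1 := by
  simp [tanhTransition, hk]

lemma tanhTransition_self (ω R : ℝ) : tanhTransition ω R R = 0 := by
  simp [tanhTransition]

lemma tanhTransition_two_mul_sub (ω R t : ℝ) :
    tanhTransition ω R (2 * R - t) = -tanhTransition ω R t := by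
  rw [tanhTransition, show ω * (R - (2 * R - t)) = -(ω * (R - t)) by ring, tanh_neg, neg_div,
    tanhTransition]

lemma antitone_tanhTransition (hω : 0 < ω) (hR : 0 < R) : Antitone (tanhTransition ω R) :=
  fun _ _ hst => div_le_div_of_nonneg_right
    (strictMono_tanh.monotone (by gcongr)) (tanh_pos (mul_pos hω hR)).le

lemma tanhTransition_mem_Icc (hω : 0 < ω) (hR : 0 < R) (ht : t ∈ Icc 0 R) :
    tanhTransition ω R t ∈ Icc 0 1 := by
  have hanti := antitone_tanhTransition hω hR
  constructor
  · rw [← tanhTransition_self ω R]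
    exact hanti ht.2
  · rw [← tanhTransition_zero (tanh_pos (mul_pos hω hR)).ne']
    exact hanti ht.1

lemma tanhCutoff_of_mem (hω : 0 < ω) (hR : 0 < R) (ht : t ∈ Icc 0 R) :
    tanhCutoff ω R t = (1 + tanhTransition ω R t) / 2 := by
  have h := tanhTransition_mem_Icc hω hR ht
  rw [tanhCutoff, min_eq_right h.2, max_eq_right (by linarith [h.1])]

lemma tanhCutoff_two_mul_sub_of_mem (hω : 0 < ω) (hR : 0 < R) (ht : t ∈ Icc 0 R) :
    tanhCutoff ω R (2 * R - t) = (1 - tanhTransition ω R t) / 2 := by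
  have h := tanhTransition_mem_Icc hω hR ht
  rw [tanhCutoff, tanhTransition_two_mul_sub, min_eq_right (by linarith [h.1]),
    max_eq_right (by linarith [h.2]), ← sub_eq_add_neg]

lemma isArmCutoff_tanhCutoff (hω : 0 < ω) (hR : 0 < R) : IsArmCutoff R (tanhCutoff ω R) where
  exists_lipschitzWith := by
    have hfun : tanhCutoff ω R = fun t => (2 : ℝ)⁻¹ •
        (1 + max (-1) (min 1 ((tanh (ω * R))⁻¹ • tanh (ω • (R - t))))) := by
      funext t
      simp [tanhCutoff, tanhTransition, div_eq_inv_mul]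
    have hσ := (lipschitzWith_smul (tanh (ω * R))⁻¹).comp (lipschitzWith_tanh.comp
      ((lipschitzWith_smul ω).comp ((LipschitzWith.const R).sub LipschitzWith.id)))
    rw [hfun]
    exact ⟨_, (lipschitzWith_smul (2 : ℝ)⁻¹).comp
      ((LipschitzWith.const 1).add ((hσ.const_min 1).const_max (-1)))⟩
  abs_le_one t := by
    have h1 : -1 ≤ max (-1) (min 1 (tanhTransition ω R t)) := le_max_left _ _
    have h2 : max (-1) (min 1 (tanhTransition ω R t)) ≤ 1 :=
      max_le (by norm_num) (min_le_left _ _)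
    rw [tanhCutoff, abs_le]
    constructor <;> linarith
  eq_one t ht := by
    have h := antitone_tanhTransition hω hR ht
    rw [tanhTransition_zero (tanh_pos (mul_pos hω hR)).ne'] at h
    rw [tanhCutoff, min_eq_left h]
    norm_num
  eq_zero t ht := by
    have h := antitone_tanhTransition hω hR ht
    have h0 := tanhTransition_two_mul_sub ω R 0
    rw [sub_zero, tanhTransition_zero (tanh_pos (mul_pos hω hR)).ne'] at h0
    rw [h0] at h
    rw [tanhCutoff, min_eq_right (by linarith), max_eq_left h]
    norm_num

end TanhCutoff

section ArmEnergy

variable {u : ℝ × ℝ → ℝ}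

lemma gradSq2_mul_fst {σ : ℝ → ℝ} {σ' : ℝ} {p : ℝ × ℝ} (hσ : HasDerivAt σ σ' p.1)
    (hu : Differentiable ℝ u) :
    gradSq2 (fun p => σ p.1 * u p) p =
      (σ' * u p + σ p.1 * fderiv ℝ u p (1, 0)) ^ 2 + (σ p.1 * fderiv ℝ u p (0, 1)) ^ 2 :=
  gradSq2_eq_of_hasDerivAt
    (((hσ.differentiableAt.comp p differentiableAt_fst).mul (hu p)))
    (hσ.mul (hasDerivAt_left hu p.1 p.2)) ((hasDerivAt_right hu p.1 p.2).const_mul (σ p.1))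

lemma setIntegral_Ioo_prod_Ioo {F : ℝ × ℝ → ℝ} (hF : Continuous F) {a b c d : ℝ} (hab : a ≤ b)
    (hcd : c ≤ d) :
    ∫ p in Ioo a b ×ˢ Ioo c d, F p = ∫ y in c..d, ∫ x in a..b, F (x, y) := by
  have hFs : IntegrableOn (fun p => F p.swap) (Ioo c d ×ˢ Ioo a b) (volume.prod volume) :=
    integrableOn_Ioo_prod_Ioo (hF.comp continuous_swap) c d a b
  rw [Measure.volume_eq_prod, ← setIntegral_prod_swap, setIntegral_prod _ hFs,
    integral_Ioo_eq_intervalIntegral hcd]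
  simp only [integral_Ioo_eq_intervalIntegral hab, Prod.swap_prod_mk]

lemma mul_integral_sq_sub_le_setIntegral (hu : ContDiff ℝ 1 u) {q q' : ℝ → ℝ} {F : ℝ × ℝ → ℝ}
    {a b c d : ℝ} (hab : a ≤ b) (hcd : c ≤ d) (hq : ∀ x ∈ Icc a b, HasDerivAt q (q' x) x)
    (hF : Continuous F)
    (h : ∀ x ∈ Ioo a b, ∀ y, q' x * u (x, y) ^ 2 + q x * (2 * u (x, y) * fderiv ℝ u (x, y) (1, 0))
      ≤ F (x, y)) :
    q b * (∫ y in c..d, u (b, y) ^ 2) - q a * (∫ y in c..d, u (a, y) ^ 2) ≤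
      ∫ p in Ioo a b ×ˢ Ioo c d, F p := by
  have huc := hu.continuous
  rw [setIntegral_Ioo_prod_Ioo hF hab hcd, ← intervalIntegral.integral_const_mul,
    ← intervalIntegral.integral_const_mul, ← intervalIntegral.integral_sub
      (Continuous.intervalIntegrable (by fun_prop) _ _)
      (Continuous.intervalIntegrable (by fun_prop) _ _)]
  refine intervalIntegral.integral_mono_on hcd (Continuous.intervalIntegrable (by fun_prop) _ _)
    (Continuous.intervalIntegrable
      (intervalIntegral.continuous_parametric_intervalIntegral_of_continuous' (by fun_prop) a b)
      _ _) fun y _ => ?_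
  exact mul_sq_sub_mul_sq_le_integral hab
    (fun x _ => hasDerivAt_left (hu.differentiable one_ne_zero) x y) hq (by fun_prop)
    fun x hx => h x hx y

/-- The energy density lost when `u` is split into its parts `(1 + σ) / 2 * u` and
`(1 - σ) / 2 * u`, with `σ` a function of the first coordinate. -/
def splittingDefect (Λ : ℝ) (σ : ℝ → ℝ) (u : ℝ × ℝ → ℝ) (p : ℝ × ℝ) : ℝ :=
  (1 - σ p.1 ^ 2) / 2 * (gradSq2 u p - Λ * u p ^ 2) -
    σ p.1 * deriv σ p.1 * u p * fderiv ℝ u p (1, 0) - deriv σ p.1 ^ 2 / 2 * u p ^ 2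

lemma shiftedEnergy_add_eq_sub_splittingDefect {Λ a b c d : ℝ} {σ : ℝ → ℝ} (hσ : ContDiff ℝ 1 σ)
    (hu : ContDiff ℝ 1 u) :
    shiftedEnergy Λ (Ioo a b ×ˢ Ioo c d) (fun p => (1 + σ p.1) / 2 * u p) +
        shiftedEnergy Λ (Ioo a b ×ˢ Ioo c d) (fun p => (1 - σ p.1) / 2 * u p) =
      shiftedEnergy Λ (Ioo a b ×ˢ Ioo c d) u -
        ∫ p in Ioo a b ×ˢ Ioo c d, splittingDefect Λ σ u p := by
  have hud := hu.differentiable one_ne_zero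
  have huc := hu.continuous
  have hσd : ∀ x, HasDerivAt σ (deriv σ x) x := fun x =>
    (hσ.differentiable one_ne_zero x).hasDerivAt
  have hσc := hσ.continuous
  have := hσ.continuous_deriv le_rfl
  have : ∀ v, Continuous fun p => fderiv ℝ u p v := continuous_fderiv_apply_const hu
  have hgrad := continuous_gradSq2 hu
  have hadd : ∀ p : ℝ × ℝ, gradSq2 (fun p => (1 + σ p.1) / 2 * u p) p = _ := fun p =>
    gradSq2_mul_fst (((hσd p.1).const_add 1).div_const 2) hud
  have hsub : ∀ p : ℝ × ℝ, gradSq2 (fun p => (1 - σ p.1) / 2 * u p) p = _ := fun p =>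
    gradSq2_mul_fst (((hσd p.1).const_sub 1).div_const 2) hud
  simp only [shiftedEnergy, splittingDefect, hadd, hsub]
  rw [← integral_add (integrableOn_Ioo_prod_Ioo (by fun_prop) a b c d)
      (integrableOn_Ioo_prod_Ioo (by fun_prop) a b c d),
    ← integral_sub (integrableOn_Ioo_prod_Ioo (by fun_prop) a b c d)
      (integrableOn_Ioo_prod_Ioo (by fun_prop) a b c d)]
  congr 1 with p
  simp only [gradSq2]
  ring

end ArmEnergy

section ArmEstimate

variable {u : ℝ × ℝ → ℝ} {ω R : ℝ}

lemma integral_sq_le_mul_setIntegral_sq_fderiv (hu : ContDiff ℝ 1 u) {a b c d : ℝ} (hab : a < b)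
    (hcd : c ≤ d) (hu0 : ∀ y ∈ Icc c d, u (a, y) = 0) :
    ∫ y in c..d, u (b, y) ^ 2 ≤
      2 * (b - a) * ∫ p in Ioo a b ×ˢ Ioo c d, fderiv ℝ u p (1, 0) ^ 2 := by
  have : 0 < b - a := sub_pos.2 hab
  have hq : ∀ x ∈ Icc a b, HasDerivAt (fun x => (x + (b - 2 * a))⁻¹)
      (-1 / (x + (b - 2 * a)) ^ 2) x := fun x hx =>
    ((hasDerivAt_id' x).add_const _).fun_inv (by linarith [hx.1])
  have hpointwise : ∀ x ∈ Ioo a b, ∀ y,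
      -1 / (x + (b - 2 * a)) ^ 2 * u (x, y) ^ 2 +
        (x + (b - 2 * a))⁻¹ * (2 * u (x, y) * fderiv ℝ u (x, y) (1, 0)) ≤
      fderiv ℝ u (x, y) (1, 0) ^ 2 := fun x _ y => by
    rw [neg_div, one_div, ← inv_pow]
    linarith [sq_nonneg (fderiv ℝ u (x, y) (1, 0) - (x + (b - 2 * a))⁻¹ * u (x, y))]
  have hmain := mul_integral_sq_sub_le_setIntegral hu hab.le hcd hq
    ((continuous_fderiv_apply_const hu _).pow 2) hpointwise
  have hzero : ∫ y in c..d, u (a, y) ^ 2 = 0 := by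
    rw [intervalIntegral.integral_congr (g := fun _ => 0) fun y hy => by
      simp [hu0 y (uIcc_of_le hcd ▸ hy)], intervalIntegral.integral_zero]
  rw [hzero, mul_zero, sub_zero, show b + (b - 2 * a) = 2 * (b - a) by ring,
    inv_mul_le_iff₀ (by positivity)] at hmain
  exact hmain

/-- The defect is the sum of a Poincaré term in the transversal direction and of a one-dimensional
form in the arm variable. The latter is the derivative of `ω / 2 * (k⁻¹ - k) * σ * u²`, where
`k = tanh (ω * R)`, plus the square `(1 - σ²) / 2 * (∂₁u + ω k σ u)²`. -/
lemma neg_mul_integral_sq_le_integral_splittingDefect (hω : 0 < ω) (hR : 0 < R)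
    (hu : ContDiff ℝ 1 u) (hu0 : ∀ x ∈ Ioo 0 R, u (x, -1) = 0 ∧ u (x, 0) = 0) :
    -(ω / 2 * ((tanh (ω * R))⁻¹ - tanh (ω * R)) * ∫ y in (-1)..0, u (0, y) ^ 2) ≤
      ∫ p in Ioo 0 R ×ˢ Ioo (-1) 0,
        splittingDefect (π ^ 2 - ω ^ 2) (tanhTransition ω R) u p := by
  have hk := (tanh_pos (mul_pos hω hR)).ne'
  set k := tanh (ω * R)
  set σ := tanhTransition ω R
  have hkk : k * k⁻¹ = 1 := mul_inv_cancel₀ hk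
  have hσ : ∀ x, HasDerivAt σ (-(ω * (k⁻¹ - k * σ x ^ 2))) x := hasDerivAt_tanhTransition hk
  have hσ1 : ∀ x ∈ Ioo 0 R, 0 ≤ (1 - σ x ^ 2) / 2 := fun x hx => by
    have h := tanhTransition_mem_Icc hω hR (Ioo_subset_Icc_self hx)
    linarith [pow_le_one₀ (n := 2) h.1 h.2]
  have hσc : Continuous σ := (contDiff_tanhTransition ω R).continuous
  have huc := hu.continuous
  have : ∀ v, Continuous fun p => fderiv ℝ u p v := continuous_fderiv_apply_const hu
  let P : ℝ × ℝ → ℝ := fun p =>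
    (1 - σ p.1 ^ 2) / 2 * (fderiv ℝ u p (0, 1) ^ 2 - (π / (0 - -1)) ^ 2 * u p ^ 2)
  let S : ℝ × ℝ → ℝ := fun p =>
    (1 - σ p.1 ^ 2) / 2 * (fderiv ℝ u p (1, 0) ^ 2 + ω ^ 2 * u p ^ 2) +
      σ p.1 * (ω * (k⁻¹ - k * σ p.1 ^ 2)) * u p * fderiv ℝ u p (1, 0) -
      (ω * (k⁻¹ - k * σ p.1 ^ 2)) ^ 2 / 2 * u p ^ 2
  have hsplit : ∀ p, splittingDefect (π ^ 2 - ω ^ 2) σ u p = P p + S p := fun p => by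
    simp only [splittingDefect, P, S, gradSq2, (hσ _).deriv]
    ring
  have hP := poincare_strip hu measurableSet_Ioo (c := -1) (d := 0) (by norm_num) hu0 hσ1
  have hS := mul_integral_sq_sub_le_setIntegral hu hR.le (c := -1) (d := 0) (by norm_num)
    (q := fun x => ω / 2 * (k⁻¹ - k) * σ x) (fun x _ => (hσ x).const_mul _)
    (F := S) (by fun_prop) fun x hx y => by
      have hsquare := mul_nonneg (hσ1 x hx)
        (sq_nonneg (fderiv ℝ u (x, y) (1, 0) + ω * k * σ x * u (x, y)))
      simp only [S]
      linear_combination hsquare + (1 - σ x ^ 2) / 2 * ω ^ 2 * u (x, y) ^ 2 * hkk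
  simp only [σ, tanhTransition_self, tanhTransition_zero hk, mul_zero, zero_mul, mul_one,
    zero_sub] at hS
  simp only [hsplit]
  rw [integral_add (integrableOn_Ioo_prod_Ioo (by fun_prop) 0 R (-1) 0)
    (integrableOn_Ioo_prod_Ioo (by fun_prop) 0 R (-1) 0)]
  exact hS.trans (le_add_of_nonneg_left hP)

lemma shiftedEnergy_reflectedExtension_tanhCutoff_le (hω : 0 < ω) (hR : 0 < R) (hu : AdmR R u) :
    shiftedEnergy (π ^ 2 - ω ^ 2) (Ici 0 ×ˢ II) (reflectedExtension R (tanhCutoff ω R) u) ≤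
      shiftedEnergy (π ^ 2 - ω ^ 2) (Ioo 0 R ×ˢ II) u +
        ω / 2 * ((tanh (ω * R))⁻¹ - tanh (ω * R)) * ∫ y in (-1)..0, u (0, y) ^ 2 := by
  have hopen : IsOpen (Ioo 0 R ×ˢ II : Set (ℝ × ℝ)) := isOpen_Ioo.prod isOpen_Ioo
  have hleft : EqOn (fun p => tanhCutoff ω R p.1 * u p)
      (fun p => (1 + tanhTransition ω R p.1) / 2 * u p) (Ioo 0 R ×ˢ II) := fun p hp => by
    simp only [tanhCutoff_of_mem hω hR (Ioo_subset_Icc_self hp.1)]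
  have hright : EqOn (fun p => tanhCutoff ω R (2 * R - p.1) * u p)
      (fun p => (1 - tanhTransition ω R p.1) / 2 * u p) (Ioo 0 R ×ˢ II) := fun p hp => by
    simp only [tanhCutoff_two_mul_sub_of_mem hω hR (Ioo_subset_Icc_self hp.1)]
  have hdefect := neg_mul_integral_sq_le_integral_splittingDefect hω hR hu.1 fun x hx =>
    ⟨hu.eq_zero hR (.inl (min_eq_right (by linarith [hx.1]))) hx.2.le (by linarith),
      hu.eq_zero hR (.inr (min_eq_right hx.1.le)) hx.2.le hR.le⟩
  rw [shiftedEnergy_reflectedExtension_arm (isArmCutoff_tanhCutoff hω hR) hR hu,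
    shiftedEnergy_congr_of_isOpen hopen hleft, shiftedEnergy_congr_of_isOpen hopen hright, II,
    shiftedEnergy_add_eq_sub_splittingDefect (contDiff_tanhTransition ω R) hu.1]
  linarith

end ArmEstimate

section Convergence

variable {u : ℝ × ℝ → ℝ} {ω R s : ℝ}

lemma integrableOn_GamR (hu : Continuous u) (R : ℝ) : IntegrableOn u (GamR R) :=
  (integrableOn_Ioo_prod_Ioo hu (-1) R (-1) R).mono_set fun p hp => by
    rw [mem_GamR_iff] at hp
    exact ⟨⟨hp.1.1, hp.2.2.1⟩, hp.1.2, hp.2.2.2⟩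

lemma shiftedEnergy_Ico_prod (Λ a b : ℝ) (T : Set ℝ) (u : ℝ × ℝ → ℝ) :
    shiftedEnergy Λ (Ico a b ×ˢ T) u = shiftedEnergy Λ (Ioo a b ×ˢ T) u :=
  setIntegral_congr_set (Measure.set_prod_ae_eq Ioo_ae_eq_Ico.symm (ae_eq_refl T))

lemma integral_sq_add_integral_sq_comp_swap_le (hR : 0 < R) (hu : AdmR R u) :
    (∫ t in (-1)..0, u (0, t) ^ 2) + ∫ t in (-1)..0, (u ∘ Prod.swap) (0, t) ^ 2 ≤
      2 * ∫ p in GamR R, gradSq2 u p := by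
  have htrace : ∀ {v : ℝ × ℝ → ℝ}, AdmR R v → ∫ t in (-1)..0, v (0, t) ^ 2 ≤
      2 * ∫ p in II ×ˢ II, fderiv ℝ v p (1, 0) ^ 2 := fun {v} hv => by
    have h := integral_sq_le_mul_setIntegral_sq_fderiv hv.1 (a := -1) (b := 0) (c := -1) (d := 0)
      (by norm_num) (by norm_num) fun y hy =>
        hv.eq_zero hR (.inl (min_eq_left hy.1)) (by linarith) (hy.2.trans hR.le)
    norm_num at h
    exact h
  have hswap : ∫ p in II ×ˢ II, fderiv ℝ (u ∘ Prod.swap) p (1, 0) ^ 2 =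
      ∫ p in II ×ˢ II, fderiv ℝ u p (0, 1) ^ 2 := by
    simp only [fderiv_comp_swap_apply, Prod.swap_prod_mk, Measure.volume_eq_prod]
    exact setIntegral_prod_swap II II fun p => fderiv ℝ u p (0, 1) ^ 2
  have hint : ∀ v, IntegrableOn (fun p => fderiv ℝ u p v ^ 2) (II ×ˢ II) := fun v =>
    integrableOn_Ioo_prod_Ioo ((continuous_fderiv_apply_const hu.1 v).pow 2) _ _ _ _
  calc _ ≤ 2 * (∫ p in II ×ˢ II, fderiv ℝ u p (1, 0) ^ 2) +
        2 * ∫ p in II ×ˢ II, fderiv ℝ u p (0, 1) ^ 2 :=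
        add_le_add (htrace hu) (hswap ▸ htrace hu.comp_swap)
    _ = 2 * ∫ p in GamR 0, gradSq2 u p := by
        rw [← mul_add, ← integral_add (hint _) (hint _), GamR_zero]
        rfl
    _ ≤ 2 * ∫ p in GamR R, gradSq2 u p := by
        exact mul_le_mul_of_nonneg_left (setIntegral_mono_set
          (integrableOn_GamR (continuous_gradSq2 hu.1) R) (.of_forall (gradSq2_nonneg u))
          (GamR_mono hR.le).eventuallyLE) zero_le_two

lemma shiftedEnergy_Gam_reflectedExtension_le (hω : 0 < ω) (hR : 0 < R) (hu : AdmR R u) :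
    shiftedEnergy (π ^ 2 - ω ^ 2) Gam (reflectedExtension R (tanhCutoff ω R) u) ≤
      shiftedEnergy (π ^ 2 - ω ^ 2) (GamR R) u +
        ω * ((tanh (ω * R))⁻¹ - tanh (ω * R)) * ∫ p in GamR R, gradSq2 u p := by
  have huc := hu.1.continuous
  have hgrad := continuous_gradSq2 hu.1
  have htrace := mul_le_mul_of_nonneg_left (integral_sq_add_integral_sq_comp_swap_le hR hu)
    (mul_nonneg (half_pos hω).le (sub_nonneg.2 (tanh_le_inv_tanh (mul_pos hω hR))))
  have harm := shiftedEnergy_reflectedExtension_tanhCutoff_le hω hR hu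
  have harm_swap := shiftedEnergy_reflectedExtension_tanhCutoff_le hω hR hu.comp_swap
  rw [shiftedEnergy_reflectedExtension (isArmCutoff_tanhCutoff hω hR) hR hu,
    shiftedEnergy_GamR hR.le (integrableOn_GamR (by fun_prop) R), shiftedEnergy_Ico_prod,
    shiftedEnergy_Ico_prod]
  linarith

lemma omega_pos : 0 < omega := sqrt_pos.2 (sub_pos.2 lamG_lt_pi_sq)

lemma lamG_eq_pi_sq_sub_omega_sq : lamG = π ^ 2 - omega ^ 2 := by
  rw [omega, sq_sqrt (sub_nonneg.2 lamG_lt_pi_sq.le), sub_sub_cancel]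

lemma lamG_mul_integral_sq_le_of_admR (hR : 0 < R) (hu : AdmR R u) :
    lamG * ∫ p in GamR R, u p ^ 2 ≤
      (1 + omega * ((tanh (omega * R))⁻¹ - tanh (omega * R))) * ∫ p in GamR R, gradSq2 u p := by
  have hχ := isArmCutoff_tanhCutoff omega_pos hR
  obtain ⟨K, hK⟩ := exists_lipschitzWith_reflectedExtension hχ hR.le hu.1
  have hc := hasCompactSupport_reflectedExtension hχ hR hu
  have hext : 0 ≤ shiftedEnergy lamG Gam (reflectedExtension R (tanhCutoff omega R) u) := by
    rw [shiftedEnergy_eq_sub_of_lipschitz hK hc, sub_nonneg]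
    exact lamG_mul_integral_sq_le hK hc (support_reflectedExtension_subset hχ hR hu)
  have henergy := shiftedEnergy_Gam_reflectedExtension_le omega_pos hR hu
  rw [← lamG_eq_pi_sq_sub_omega_sq, shiftedEnergy_eq_sub
    (integrableOn_GamR (continuous_gradSq2 hu.1) R)
    (integrableOn_GamR (hu.1.continuous.pow 2) R)] at henergy
  linarith

lemma inv_tanh_sub_tanh_le (hs : exp (-2 * s) ≤ 1 / 2) :
    (tanh s)⁻¹ - tanh s ≤ 6 * exp (-2 * s) := by
  set y := exp (-2 * s)
  have hy : 0 < y := exp_pos _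
  have htanh : tanh s = (1 - y) / (1 + y) := by
    have hy' : exp (-s) = exp s * y := by rw [← exp_add]; ring_nf
    rw [tanh_eq, hy']
    field_simp
  have h1 : 0 < 1 - y := by linarith
  rw [htanh, inv_div, div_sub_div _ _ h1.ne' (by positivity), div_le_iff₀ (by positivity)]
  nlinarith [mul_nonneg hy.le (show 0 ≤ 1 - 3 * y ^ 2 by nlinarith)]

lemma lamG_sub_lamR_le (hR : 0 < R) :
    lamG - lamR R ≤ omega * ((tanh (omega * R))⁻¹ - tanh (omega * R)) * π ^ 2 := by
  set δ := omega * ((tanh (omega * R))⁻¹ - tanh (omega * R))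
  have hδ : 0 ≤ δ :=
    mul_nonneg omega_pos.le (sub_nonneg.2 (tanh_le_inv_tanh (mul_pos omega_pos hR)))
  have hquot : lamG / (1 + δ) ≤ lamR R := by
    rw [lamR_eq_rayleighInf]
    refine le_rayleighInf (exists_admR_ne_zero hR.le) fun u hu => ?_
    rw [div_mul_eq_mul_div, div_le_iff₀' (by positivity)]
    exact lamG_mul_integral_sq_le_of_admR hR hu
  rw [div_le_iff₀ (by positivity)] at hquot
  have hlt : lamR R ≤ π ^ 2 := (lamR_le_lamG hR.le).trans lamG_lt_pi_sq.le
  linarith [mul_le_mul_of_nonneg_left hlt hδ]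

end Convergence

/-- Corollary 2.4: exponential convergence of the first mixed
eigenvalue of the truncated guide to the first Dirichlet eigenvalue of the infinite
broken guide: there is `C₁` such that for all `R ≥ 0`,
`0 ≤ λ₁(Γ) − λ₁(Γ_R) ≤ C₁ e^{−2Rω}` with `ω = √(π² − λ₁(Γ))`. -/
theorem exponential_convergence_lamR :
    ∃ C₁ : ℝ, ∀ R : ℝ, 0 ≤ R →
      0 ≤ lamG - lamR R ∧ lamG - lamR R ≤ C₁ * Real.exp (-2 * R * omega) := by
  refine ⟨π ^ 2 * (2 + 6 * omega), fun R hR => ⟨sub_nonneg.2 (lamR_le_lamG hR), ?_⟩⟩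
  rw [show -2 * R * omega = -2 * (omega * R) by ring]
  have hω := omega_pos
  rcases le_or_gt (exp (-2 * (omega * R))) (1 / 2) with hsmall | hlarge
  · have hR' : 0 < R := hR.lt_of_ne' fun h => by norm_num [h] at hsmall
    calc lamG - lamR R ≤ omega * ((tanh (omega * R))⁻¹ - tanh (omega * R)) * π ^ 2 :=
          lamG_sub_lamR_le hR'
      _ ≤ omega * (6 * exp (-2 * (omega * R))) * π ^ 2 := by
          gcongr
          exact inv_tanh_sub_tanh_le hsmall
      _ ≤ π ^ 2 * (2 + 6 * omega) * exp (-2 * (omega * R)) := by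
          linarith [show 0 ≤ π ^ 2 * 2 * exp (-2 * (omega * R)) by positivity]
  · calc lamG - lamR R ≤ π ^ 2 * 1 := by
          linarith [lamG_lt_pi_sq, lamR_eq_rayleighInf R ▸ rayleighInf_nonneg _ _]
      _ ≤ π ^ 2 * ((2 + 6 * omega) * exp (-2 * (omega * R))) := by
          gcongr
          nlinarith
      _ = π ^ 2 * (2 + 6 * omega) * exp (-2 * (omega * R)) := (mul_assoc _ _ _).symm
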